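/- arXiv:1612.06591 — 2 statements merged into one kernel-verified Lean document; each statement's English description precedes it below -/
import Mathlib

section
/- The map ν ↦ η_ν is real-analytic on the interval [0,1] and monotonically decreasing on [0,1] (in particular η_0 = 1 and η_1 = π(4−√13)/(3(4−π))). -/
/-- Υ_ν := √(1 − ν²). -/
noncomputable def Ups (ν : ℝ) : ℝ := Real.sqrt (1 - ν ^ 2)

/-- w_ν := Υ_ν · cot(π Υ_ν / 2) for ν ∈ [0,1), with w_1 := 2/π (continuous extension). -/
noncomputable def w (ν : ℝ) : ℝ :=
  if ν = 1 then 2 / Real.pi else Ups ν * Real.cot (Real.pi * Ups ν / 2)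

/-- η_ν := (√(9+4ν²) − 4ν)/(3(1 − 2 w_ν)) for ν ≠ √3/2, and η_{√3/2} := 1/(√3 (π−2)). -/
noncomputable def eta (ν : ℝ) : ℝ :=
  if ν = Real.sqrt 3 / 2 then 1 / (Real.sqrt 3 * (Real.pi - 2))
  else (Real.sqrt (9 + 4 * ν ^ 2) - 4 * ν) / (3 * (1 - 2 * w ν))

/-!
With `x = √(1 - ν²) / 2` and `u = x²`, the Mittag-Leffler expansion of the cotangent reads
`π x cot (π x) = 1 - 2 ∑ u / (n² - u)`, the sum over `n ≥ 1`. Since `2 w_ν = 1` at `ν = √3/2`,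
that is at `u = 1/16`, subtracting the expansions at `u` and at `1/16` gives
`1 - 2 w_ν = (3 - 4ν²) / (2π) * ∑ n² / ((n² - 1/16) (n² - u))`, while
`(√(9 + 4ν²) - 4ν) (√(9 + 4ν²) + 4ν) = 3 (3 - 4ν²)`. The factor `3 - 4ν²` cancels, so that
`2π / η_ν` is `√(9 + 4ν²) + 4ν` times the series. Every term of this product is increasing in `ν`,
and the series is positive and, as a function of `u`, analytic for `|u| < 1`. At `ν = √3/2`, that is
`u = 1/16`, the series is the derivative of `∑ u / (n² - u)`, which gives the value of `η` there.
-/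

open scoped Real

section CotDivDiff

variable {𝕜 : Type*} [RCLike 𝕜]

/-- The divided difference at `a` and `u` of `u ↦ (1 - π√u cot(π√u)) / 2`, written as the series
which termwise subtraction of the expansion `(1 - π√u cot(π√u)) / 2 = ∑ u / (n² - u)` gives. Unlike
the difference quotient it is meaningful for `u = a`, and `u * cotDivDiff 0 u` is the expanded
function itself. The summation index is shifted to start at `n = 1`. -/
noncomputable def cotDivDiff (a u : 𝕜) : 𝕜 :=
  ∑' n : ℕ, ((n : 𝕜) + 1) ^ 2 / ((((n : 𝕜) + 1) ^ 2 - a) * (((n : 𝕜) + 1) ^ 2 - u))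

lemma norm_natCast_add_one_sq (n : ℕ) : ‖((n : 𝕜) + 1) ^ 2‖ = ((n : ℝ) + 1) ^ 2 := by
  rw [norm_pow, ← Nat.cast_add_one, RCLike.norm_natCast, Nat.cast_add_one]

lemma one_sub_norm_mul_sq_le_norm_sq_sub (z : 𝕜) (n : ℕ) :
    (1 - ‖z‖) * ((n : ℝ) + 1) ^ 2 ≤ ‖((n : 𝕜) + 1) ^ 2 - z‖ := by
  have h_sq : 1 ≤ ((n : ℝ) + 1) ^ 2 := one_le_pow₀ (by simp)
  calc (1 - ‖z‖) * ((n : ℝ) + 1) ^ 2 ≤ ((n : ℝ) + 1) ^ 2 - ‖z‖ := by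
        nlinarith [norm_nonneg z]
    _ = ‖((n : 𝕜) + 1) ^ 2‖ - ‖z‖ := by rw [norm_natCast_add_one_sq]
    _ ≤ ‖((n : 𝕜) + 1) ^ 2 - z‖ := norm_sub_norm_le _ _

lemma sq_sub_ne_zero_of_norm_lt_one {z : 𝕜} (hz : ‖z‖ < 1) (n : ℕ) :
    ((n : 𝕜) + 1) ^ 2 - z ≠ 0 :=
  norm_pos_iff.1 <| (mul_pos (sub_pos.2 hz) (by positivity)).trans_le
    (one_sub_norm_mul_sq_le_norm_sq_sub z n)

lemma norm_cotDivDiff_term_le {a u : 𝕜} {r : ℝ} (ha : ‖a‖ < 1) (hr : r < 1) (hu : ‖u‖ ≤ r)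
    (n : ℕ) :
    ‖((n : 𝕜) + 1) ^ 2 / ((((n : 𝕜) + 1) ^ 2 - a) * (((n : 𝕜) + 1) ^ 2 - u))‖ ≤
      1 / ((1 - ‖a‖) * (1 - r)) * (1 / ((n : ℝ) + 1) ^ 2) := by
  have ha' : 0 < 1 - ‖a‖ := sub_pos.2 ha
  have hr' : 0 < 1 - r := sub_pos.2 hr
  have h_a := one_sub_norm_mul_sq_le_norm_sq_sub a n
  have h_u : (1 - r) * ((n : ℝ) + 1) ^ 2 ≤ ‖((n : 𝕜) + 1) ^ 2 - u‖ :=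
    (by gcongr : _ ≤ _).trans (one_sub_norm_mul_sq_le_norm_sq_sub u n)
  rw [norm_div, norm_mul, norm_natCast_add_one_sq]
  calc ((n : ℝ) + 1) ^ 2 / (‖((n : 𝕜) + 1) ^ 2 - a‖ * ‖((n : 𝕜) + 1) ^ 2 - u‖)
      ≤ ((n : ℝ) + 1) ^ 2 /
          (((1 - ‖a‖) * ((n : ℝ) + 1) ^ 2) * ((1 - r) * ((n : ℝ) + 1) ^ 2)) := by gcongr
    _ = 1 / ((1 - ‖a‖) * (1 - r)) * (1 / ((n : ℝ) + 1) ^ 2) := by field_simp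

lemma summable_one_div_nat_add_one_sq : Summable fun n : ℕ ↦ 1 / ((n : ℝ) + 1) ^ 2 := by
  exact_mod_cast (summable_nat_add_iff 1).2 (Real.summable_one_div_nat_pow.2 one_lt_two)

lemma summable_cotDivDiff {a u : 𝕜} (ha : ‖a‖ < 1) (hu : ‖u‖ < 1) :
    Summable fun n : ℕ ↦
      ((n : 𝕜) + 1) ^ 2 / ((((n : 𝕜) + 1) ^ 2 - a) * (((n : 𝕜) + 1) ^ 2 - u)) :=
  .of_norm_bounded (summable_one_div_nat_add_one_sq.mul_left _)
    (norm_cotDivDiff_term_le ha hu le_rfl)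

lemma mul_cotDivDiff_zero_sub {a u : 𝕜} (ha : ‖a‖ < 1) (hu : ‖u‖ < 1) :
    u * cotDivDiff 0 u - a * cotDivDiff 0 a = (u - a) * cotDivDiff a u := by
  have h0 : ‖(0 : 𝕜)‖ < 1 := by simp
  simp only [cotDivDiff, ← tsum_mul_left]
  rw [← ((summable_cotDivDiff h0 hu).mul_left u).tsum_sub ((summable_cotDivDiff h0 ha).mul_left a)]
  refine tsum_congr fun n ↦ ?_
  have h_sq := sq_sub_ne_zero_of_norm_lt_one h0 n
  have h_a := sq_sub_ne_zero_of_norm_lt_one ha n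
  have h_u := sq_sub_ne_zero_of_norm_lt_one hu n
  field_simp
  ring

end CotDivDiff

lemma analyticAt_cotDivDiff_complex {a u : ℂ} (ha : ‖a‖ < 1) (hu : ‖u‖ < 1) :
    AnalyticAt ℂ (cotDivDiff a) u := by
  obtain ⟨r, hur, hr⟩ := exists_between hu
  have h_diff : DifferentiableOn ℂ (cotDivDiff a) (Metric.ball 0 r) := by
    refine Complex.differentiableOn_tsum_of_summable_norm
      (summable_one_div_nat_add_one_sq.mul_left (1 / ((1 - ‖a‖) * (1 - r)))) (fun n z hz ↦ ?_)
      Metric.isOpen_ball fun n z hz ↦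
        norm_cotDivDiff_term_le ha hr (mem_ball_zero_iff.1 hz).le n
    have h_ne := mul_ne_zero (sq_sub_ne_zero_of_norm_lt_one ha n)
      (sq_sub_ne_zero_of_norm_lt_one ((mem_ball_zero_iff.1 hz).trans hr) n)
    fun_prop (disch := exact h_ne)
  exact h_diff.analyticAt (Metric.isOpen_ball.mem_nhds (mem_ball_zero_iff.2 hur))

lemma ofReal_cotDivDiff (a u : ℝ) : ((cotDivDiff a u : ℝ) : ℂ) = cotDivDiff (a : ℂ) (u : ℂ) := by
  simp only [cotDivDiff]
  push_cast
  rfl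

lemma analyticAt_cotDivDiff {a u : ℝ} (ha : |a| < 1) (hu : |u| < 1) :
    AnalyticAt ℝ (cotDivDiff a) u := by
  have h_re : AnalyticAt ℝ (fun v : ℝ ↦ (cotDivDiff (a : ℂ) v).re) u :=
    (analyticAt_cotDivDiff_complex (by simpa using ha) (by simpa using hu)).re_ofReal
  simpa only [← ofReal_cotDivDiff, Complex.ofReal_re] using h_re

lemma cotDivDiff_pos {a u : ℝ} (ha : |a| < 1) (hu : |u| < 1) : 0 < cotDivDiff a u := by
  have h_term (n : ℕ) :
      0 < ((n : ℝ) + 1) ^ 2 / ((((n : ℝ) + 1) ^ 2 - a) * (((n : ℝ) + 1) ^ 2 - u)) := by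
    have h_sq : 1 ≤ ((n : ℝ) + 1) ^ 2 := one_le_pow₀ (by simp)
    have h_a : 0 < ((n : ℝ) + 1) ^ 2 - a := by linarith [lt_of_abs_lt ha]
    have h_u : 0 < ((n : ℝ) + 1) ^ 2 - u := by linarith [lt_of_abs_lt hu]
    positivity
  have h_summable := summable_cotDivDiff (𝕜 := ℝ) ha hu
  exact h_summable.tsum_pos (fun n ↦ (h_term n).le) 0 (h_term 0)

lemma hasDerivAt_mul_cotDivDiff_zero {a : ℝ} (ha : |a| < 1) :
    HasDerivAt (fun u ↦ u * cotDivDiff 0 u) (cotDivDiff a a) a := by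
  have h_prod : HasDerivAt (fun u ↦ a * cotDivDiff 0 a + (u - a) * cotDivDiff a u)
      (cotDivDiff a a) a := by
    simpa using (((hasDerivAt_id a).sub_const a).mul
      (analyticAt_cotDivDiff ha ha).differentiableAt.hasDerivAt).const_add (a * cotDivDiff 0 a)
  refine h_prod.congr_of_eventuallyEq ?_
  filter_upwards [continuous_abs.continuousAt.eventually_lt_const ha] with u hu
  rw [← mul_cotDivDiff_zero_sub ha hu]
  ring

lemma pi_mul_mul_cot_eq_of_mem_integerComplement {z : ℂ} (hz : z ∈ Complex.integerComplement) :
    π * z * Complex.cot (π * z) = 1 - 2 * (z ^ 2 * cotDivDiff 0 (z ^ 2)) := by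
  have hz0 : z ≠ 0 := Complex.integerComplement.ne_zero hz
  have h_sum : z * ∑' n : ℕ, (1 / (z - (n + 1)) + 1 / (z + (n + 1))) =
      -2 * (z ^ 2 * cotDivDiff 0 (z ^ 2)) := by
    simp only [cotDivDiff, ← tsum_mul_left]
    refine tsum_congr fun n ↦ ?_
    have h_nat : (n : ℂ) + 1 ≠ 0 := Nat.cast_add_one_ne_zero n
    have h_add : z + (n + 1) ≠ 0 := by
      exact_mod_cast Complex.integerComplement_add_ne_zero hz (n + 1)
    have h_sub : z - (n + 1) ≠ 0 := by
      simpa [sub_eq_add_neg] using Complex.integerComplement_add_ne_zero hz (-(n + 1))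
    have h_sq : ((n : ℂ) + 1) ^ 2 - z ^ 2 ≠ 0 := by
      rw [← neg_ne_zero, neg_sub, sq_sub_sq]
      exact mul_ne_zero h_add h_sub
    field_simp
    ring
  rw [← cot_series_rep' hz, mul_sub, mul_one_div_cancel hz0] at h_sum
  linear_combination h_sum

lemma pi_mul_mul_cot_eq {x : ℝ} (hx0 : x ≠ 0) (hx1 : |x| < 1) :
    π * x * Real.cot (π * x) = 1 - 2 * (x ^ 2 * cotDivDiff 0 (x ^ 2)) := by
  have hx : (x : ℂ) ∈ Complex.integerComplement := by
    rintro ⟨k, hk⟩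
    obtain rfl : (k : ℝ) = x := by exact_mod_cast hk
    exact hx0 (by exact_mod_cast Int.abs_lt_one_iff.1 (by exact_mod_cast hx1))
  have h := pi_mul_mul_cot_eq_of_mem_integerComplement hx
  rw [← Complex.ofReal_pow, ← Complex.ofReal_zero, ← ofReal_cotDivDiff] at h
  exact_mod_cast h

lemma hasDerivAt_mul_cot {x : ℝ} (hx : Real.sin x ≠ 0) :
    HasDerivAt (fun y ↦ y * Real.cot y) (Real.cot x - x / Real.sin x ^ 2) x := by
  have h_cot : HasDerivAt Real.cot (-1 / Real.sin x ^ 2) x := by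
    convert! (Real.hasDerivAt_cos x).div (Real.hasDerivAt_sin x) hx using 1
    · exact funext Real.cot_eq_cos_div_sin
    · congr 1
      linear_combination Real.sin_sq_add_cos_sq x
  convert! (hasDerivAt_id x).mul h_cot using 1
  simp only [id]
  ring

lemma cotDivDiff_sq_self {x : ℝ} (hx0 : x ≠ 0) (hx1 : |x| < 1) :
    cotDivDiff (x ^ 2) (x ^ 2) =
      π / (4 * x) * (π * x / Real.sin (π * x) ^ 2 - Real.cot (π * x)) := by
  have h_sin : Real.sin (π * x) ≠ 0 := by
    have h_lt := abs_lt.1 hx1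
    rw [Ne, Real.sin_eq_zero_iff_of_lt_of_lt (by nlinarith [Real.pi_pos])
      (by nlinarith [Real.pi_pos])]
    exact mul_ne_zero Real.pi_ne_zero hx0
  have h_series : HasDerivAt (fun y : ℝ ↦ 1 - 2 * (y ^ 2 * cotDivDiff 0 (y ^ 2)))
      (-(2 * (cotDivDiff (x ^ 2) (x ^ 2) * (2 * x)))) x := by
    have h_sq : |x ^ 2| < 1 := by simpa [abs_pow] using pow_lt_one₀ (abs_nonneg x) hx1 two_ne_zero
    have h_pow : HasDerivAt (fun y : ℝ ↦ y ^ 2) (2 * x) x := by simpa using hasDerivAt_pow 2 x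
    have h_comp := (hasDerivAt_mul_cotDivDiff_zero h_sq).comp (h := fun y ↦ y ^ 2) x h_pow
    exact (h_comp.const_mul 2).const_sub 1
  have h_trig : HasDerivAt (fun y : ℝ ↦ π * y * Real.cot (π * y))
      ((Real.cot (π * x) - π * x / Real.sin (π * x) ^ 2) * π) x :=
    (hasDerivAt_mul_cot h_sin).comp x (by simpa using (hasDerivAt_id x).const_mul π)
  have h_eq : (fun y : ℝ ↦ π * y * Real.cot (π * y)) =ᶠ[nhds x]
      fun y ↦ 1 - 2 * (y ^ 2 * cotDivDiff 0 (y ^ 2)) := by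
    filter_upwards [isOpen_ne.mem_nhds hx0,
      continuous_abs.continuousAt.eventually_lt_const hx1] with y hy0 hy1
    exact pi_mul_mul_cot_eq hy0 hy1
  have h_deriv := (h_series.congr_of_eventuallyEq h_eq).unique h_trig
  field_simp at h_deriv ⊢
  linear_combination -h_deriv

lemma cotDivDiff_one_div_sixteen_self :
    cotDivDiff (1 / 16) (1 / 16 : ℝ) = π * (π - 2) / 2 := by
  have h := cotDivDiff_sq_self (x := 1 / 4) (by norm_num) (by norm_num [abs_of_pos])
  rw [mul_one_div π, ← Real.tan_inv_eq_cot, Real.tan_pi_div_four, Real.sin_pi_div_four] at h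
  norm_num [div_pow] at h ⊢
  linear_combination h

lemma one_div_sixteen_mul_cotDivDiff_zero :
    1 / 16 * cotDivDiff 0 (1 / 16 : ℝ) = (1 - π / 4) / 2 := by
  have h := pi_mul_mul_cot_eq (x := 1 / 4) (by norm_num) (by norm_num [abs_of_pos])
  rw [mul_one_div π, ← Real.tan_inv_eq_cot, Real.tan_pi_div_four] at h
  norm_num at h ⊢
  linear_combination h / 2

lemma abs_one_sub_sq_div_four_lt_one {ν : ℝ} (hν : ν ∈ Set.Icc 0 1) : |(1 - ν ^ 2) / 4| < 1 := by
  rw [abs_lt]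
  constructor <;> nlinarith [hν.1, hν.2]

lemma w_eq_cotDivDiff {ν : ℝ} (hν : ν ∈ Set.Icc 0 1) :
    w ν = 2 / π * (1 - 2 * ((1 - ν ^ 2) / 4 * cotDivDiff 0 ((1 - ν ^ 2) / 4))) := by
  rcases eq_or_ne ν 1 with rfl | hν1
  · simp [w]
  have h_pos : 0 < 1 - ν ^ 2 := by nlinarith [hν.1, hν.2.lt_of_ne hν1]
  have h_Ups_sq : (Ups ν / 2) ^ 2 = (1 - ν ^ 2) / 4 := by
    rw [div_pow, Ups, Real.sq_sqrt h_pos.le]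
    norm_num
  have h_Ups_ne : Ups ν / 2 ≠ 0 := (half_pos (Real.sqrt_pos.2 h_pos)).ne'
  have h_Ups_lt : |Ups ν / 2| < 1 := by
    rw [← sq_lt_one_iff_abs_lt_one, h_Ups_sq]
    exact (abs_lt.1 (abs_one_sub_sq_div_four_lt_one hν)).2
  rw [← h_Ups_sq, ← pi_mul_mul_cot_eq h_Ups_ne h_Ups_lt, w, if_neg hν1]
  field_simp

lemma one_sub_two_mul_w {ν : ℝ} (hν : ν ∈ Set.Icc 0 1) :
    1 - 2 * w ν =
      (3 - 4 * ν ^ 2) / (2 * π) * cotDivDiff (1 / 16) ((1 - ν ^ 2) / 4) := by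
  have h := mul_cotDivDiff_zero_sub (a := (1 / 16 : ℝ)) (by norm_num [abs_of_pos])
    (abs_one_sub_sq_div_four_lt_one hν)
  rw [one_div_sixteen_mul_cotDivDiff_zero] at h
  rw [w_eq_cotDivDiff hν]
  field_simp at h ⊢
  linear_combination h / 2

/-- The denominator in `η_ν = 2π / etaDenom ν`. It comes from multiplying numerator and denominator
of `η_ν` by `√(9 + 4ν²) + 4ν` and cancelling the common factor `3 - 4ν²`, so that `ν = √3/2` is no
longer exceptional. -/
noncomputable def etaDenom (ν : ℝ) : ℝ :=
  (√(9 + 4 * ν ^ 2) + 4 * ν) * cotDivDiff (1 / 16) ((1 - ν ^ 2) / 4)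

lemma etaDenom_pos {ν : ℝ} (hν : ν ∈ Set.Icc 0 1) : 0 < etaDenom ν := by
  have h_pos := cotDivDiff_pos (a := 1 / 16) (by norm_num [abs_of_pos])
    (abs_one_sub_sq_div_four_lt_one hν)
  have hν0 := hν.1
  unfold etaDenom
  positivity

lemma analyticAt_etaDenom {ν : ℝ} (hν : ν ∈ Set.Icc 0 1) : AnalyticAt ℝ etaDenom ν := by
  have h_sqrt : AnalyticAt ℝ (fun x : ℝ ↦ √(9 + 4 * x ^ 2)) ν :=
    (Real.contDiffAt_sqrt (n := ⊤) (by positivity)).analyticAt.fun_comp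
      (f := fun x : ℝ ↦ 9 + 4 * x ^ 2) (by fun_prop)
  have h_series : AnalyticAt ℝ (fun x : ℝ ↦ cotDivDiff (1 / 16) ((1 - x ^ 2) / 4)) ν :=
    (analyticAt_cotDivDiff (by norm_num [abs_of_pos]) (abs_one_sub_sq_div_four_lt_one hν)).fun_comp
      (f := fun x : ℝ ↦ (1 - x ^ 2) / 4) (by fun_prop)
  exact (h_sqrt.fun_add (by fun_prop)).fun_mul h_series

lemma strictMonoOn_sqrt_add_div {c : ℝ} (hc : 3 ≤ c) :
    StrictMonoOn (fun x : ℝ ↦ (√(9 + 4 * x ^ 2) + 4 * x) / (c + x ^ 2))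
      (Set.Icc 0 1) := by
  intro x hx y hy hxy
  have hx0 := hx.1
  have hy1 := hy.2
  have h_sqrt_lt : √(9 + 4 * x ^ 2) < √(9 + 4 * y ^ 2) :=
    Real.sqrt_lt_sqrt (by positivity) (by nlinarith)
  have h_sqrt_le : √(9 + 4 * x ^ 2) ≤ 4 := by
    rw [Real.sqrt_le_left (by norm_num)]
    nlinarith
  have h_sum : √(9 + 4 * x ^ 2) * (x + y) ≤ 4 * (c - x * y) := by nlinarith
  rw [div_lt_div_iff₀ (by positivity) (by positivity)]
  have h_first : 0 < (√(9 + 4 * y ^ 2) - √(9 + 4 * x ^ 2)) * (c + x ^ 2) :=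
    mul_pos (sub_pos.2 h_sqrt_lt) (by positivity)
  have h_second : 0 ≤ (y - x) * (4 * (c - x * y) - √(9 + 4 * x ^ 2) * (x + y)) :=
    mul_nonneg (sub_nonneg.2 hxy.le) (sub_nonneg.2 h_sum)
  linear_combination h_first + h_second

lemma strictMonoOn_etaDenom : StrictMonoOn etaDenom (Set.Icc 0 1) := by
  intro x hx y hy hxy
  have h_summable {ν : ℝ} (hν : ν ∈ Set.Icc 0 1) :=
    (summable_cotDivDiff (a := (1 / 16 : ℝ)) (by norm_num [abs_of_pos])
      (abs_one_sub_sq_div_four_lt_one hν)).mul_left (√(9 + 4 * ν ^ 2) + 4 * ν)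
  have h_term (n : ℕ) :
      (√(9 + 4 * x ^ 2) + 4 * x) * (((n : ℝ) + 1) ^ 2 /
        ((((n : ℝ) + 1) ^ 2 - 1 / 16) * (((n : ℝ) + 1) ^ 2 - (1 - x ^ 2) / 4))) <
      (√(9 + 4 * y ^ 2) + 4 * y) * (((n : ℝ) + 1) ^ 2 /
        ((((n : ℝ) + 1) ^ 2 - 1 / 16) * (((n : ℝ) + 1) ^ 2 - (1 - y ^ 2) / 4))) := by
    have h_sq : 1 ≤ ((n : ℝ) + 1) ^ 2 := one_le_pow₀ (by simp)
    have h_coeff : 0 < 4 * ((n : ℝ) + 1) ^ 2 / (((n : ℝ) + 1) ^ 2 - 1 / 16) :=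
      div_pos (by positivity) (by linarith)
    have h_factor (p ν : ℝ) :
        p * (((n : ℝ) + 1) ^ 2 /
          ((((n : ℝ) + 1) ^ 2 - 1 / 16) * (((n : ℝ) + 1) ^ 2 - (1 - ν ^ 2) / 4))) =
        4 * ((n : ℝ) + 1) ^ 2 / (((n : ℝ) + 1) ^ 2 - 1 / 16) *
          (p / (4 * ((n : ℝ) + 1) ^ 2 - 1 + ν ^ 2)) := by
      have h_pole :
          ((n : ℝ) + 1) ^ 2 - (1 - ν ^ 2) / 4 = (4 * ((n : ℝ) + 1) ^ 2 - 1 + ν ^ 2) / 4 := by ring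
      rw [h_pole]
      field_simp
    rw [h_factor, h_factor]
    exact mul_lt_mul_of_pos_left (strictMonoOn_sqrt_add_div (by linarith) hx hy hxy) h_coeff
  simp only [etaDenom, cotDivDiff, ← tsum_mul_left]
  exact (h_summable hx).tsum_lt_tsum (i := 0) (fun n ↦ (h_term n).le) (h_term 0) (h_summable hy)

lemma eta_sqrt_three_div_two : eta (√3 / 2) = 2 * π / etaDenom (√3 / 2) := by
  have h_sq : (√3 / 2) ^ 2 = 3 / 4 := by
    rw [div_pow, Real.sq_sqrt (by norm_num)]
    norm_num
  have h_sqrt : √(9 + 4 * (3 / 4)) = 2 * √3 := by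
    rw [Real.sqrt_eq_iff_mul_self_eq (by norm_num) (by positivity)]
    nlinarith
  have h_pi : π - 2 ≠ 0 := by linarith [Real.pi_gt_three]
  rw [eta, if_pos rfl, etaDenom, h_sq, h_sqrt, show (1 - 3 / 4 : ℝ) / 4 = 1 / 16 by norm_num,
    cotDivDiff_one_div_sixteen_self]
  field_simp
  norm_num

lemma eta_eq_two_pi_div_etaDenom {ν : ℝ} (hν : ν ∈ Set.Icc 0 1) :
    eta ν = 2 * π / etaDenom ν := by
  rcases eq_or_ne ν (√3 / 2) with rfl | h_ne
  · exact eta_sqrt_three_div_two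
  have hν0 := hν.1
  have h_factor_ne : 3 - 4 * ν ^ 2 ≠ 0 := by
    contrapose! h_ne
    rw [eq_div_iff two_ne_zero, eq_comm, Real.sqrt_eq_iff_mul_self_eq (by norm_num) (by positivity)]
    linear_combination h_ne
  have h_sqrt : √(9 + 4 * ν ^ 2) ^ 2 = 9 + 4 * ν ^ 2 := Real.sq_sqrt (by positivity)
  have h_series := cotDivDiff_pos (a := 1 / 16) (by norm_num [abs_of_pos])
    (abs_one_sub_sq_div_four_lt_one hν)
  rw [eta, if_neg h_ne, one_sub_two_mul_w hν, etaDenom, div_eq_div_iff (by positivity)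
    (by positivity)]
  field_simp
  linear_combination h_sqrt

lemma analyticOn_eta : AnalyticOn ℝ eta (Set.Icc 0 1) := by
  refine AnalyticOn.congr (fun ν hν ↦ ?_) fun ν hν ↦ eta_eq_two_pi_div_etaDenom hν
  exact (analyticAt_const.fun_div (analyticAt_etaDenom hν) (etaDenom_pos hν).ne').analyticWithinAt

lemma strictAntiOn_eta : StrictAntiOn eta (Set.Icc 0 1) := by
  intro x hx y hy hxy
  rw [eta_eq_two_pi_div_etaDenom hx, eta_eq_two_pi_div_etaDenom hy]
  exact div_lt_div_of_pos_left Real.two_pi_pos (etaDenom_pos hx) (strictMonoOn_etaDenom hx hy hxy)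

lemma eta_zero : eta 0 = 1 := by
  have h_ne : (0 : ℝ) ≠ √3 / 2 := by positivity
  have h_w : w 0 = 0 := by simp [w, Ups, Real.cot_eq_cos_div_sin]
  have h_sqrt : √9 = 3 := by
    rw [Real.sqrt_eq_iff_mul_self_eq (by norm_num) (by norm_num)]
    norm_num
  rw [eta, if_neg h_ne, h_w]
  norm_num [h_sqrt]

lemma eta_one : eta 1 = π * (4 - √13) / (3 * (4 - π)) := by
  have h_lt : √3 / 2 < 1 := by
    rw [div_lt_one two_pos, Real.sqrt_lt' two_pos]
    norm_num
  have h_w : 3 * (1 - 2 * w 1) = -(3 * (4 - π)) / π := by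
    rw [w, if_pos rfl]
    field_simp
    ring
  rw [eta, if_neg h_lt.ne', h_w, div_div_eq_mul_div, div_neg, ← neg_div]
  norm_num
  ring

/-- The map ν ↦ η_ν is real-analytic on [0,1] and monotonically decreasing there;
in particular η_0 = 1 and η_1 = π(4 − √13)/(3(4 − π)). -/
theorem eta_analytic_antitone :
    AnalyticOn ℝ eta (Set.Icc 0 1) ∧ AntitoneOn eta (Set.Icc 0 1) ∧
    eta 0 = 1 ∧ eta 1 = Real.pi * (4 - Real.sqrt 13) / (3 * (4 - Real.pi)) :=
  ⟨analyticOn_eta, strictAntiOn_eta.antitoneOn, eta_zero, eta_one⟩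
end

section
/- For every ν ∈ [0,1], every s ∈ {−1/2, 1/2} and every τ ∈ ℝ, the 2×2 matrix M_s^ν(τ)*·M_s^ν(τ) − η_ν²·K^ν(τ)·𝟙₂ is positive semidefinite; moreover η_ν is the maximal constant with this property: for every η > η_ν there exists τ ∈ ℝ (in fact τ = 0) such that M_s^ν(τ)*·M_s^ν(τ) − η²·K^ν(τ)·𝟙₂ is not positive semidefinite. -/
open Matrix
open scoped ComplexOrder

/-- V_l(z) := Γ((l+1+iz)/2)Γ((l+1−iz)/2) / (2 Γ((l+2+iz)/2)Γ((l+2−iz)/2)). -/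
noncomputable def Vl (l : ℕ) (z : ℂ) : ℂ :=
  Complex.Gamma ((l + 1 + Complex.I * z) / 2) * Complex.Gamma ((l + 1 - Complex.I * z) / 2) /
    (2 * Complex.Gamma ((l + 2 + Complex.I * z) / 2) * Complex.Gamma ((l + 2 - Complex.I * z) / 2))

/-- K^ν(τ) := (1 + 4τ² + 4w_ν² − 4w_ν(sech(πτ) + 2τ tanh(πτ)))/(1 + 4τ²). -/
noncomputable def Kf (ν τ : ℝ) : ℝ :=
  (1 + 4 * τ ^ 2 + 4 * (w ν) ^ 2
      - 4 * w ν * (1 / Real.cosh (Real.pi * τ) + 2 * τ * Real.tanh (Real.pi * τ)))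
    / (1 + 4 * τ ^ 2)

/-- M_s^ν(τ): the 2×2 matrix with rows (−ν V_{1/2−s}(τ+i/2), 1) and (1, −ν V_{1/2+s}(τ+i/2));
here s ∈ {−1/2, 1/2}, so the indices 1/2 − s and 1/2 + s lie in {0, 1}. -/
noncomputable def Mmat (ν s τ : ℝ) : Matrix (Fin 2) (Fin 2) ℂ :=
  !![-(ν : ℂ) * Vl (if s = 1/2 then 0 else 1) ((τ : ℂ) + Complex.I / 2), 1;
     1, -(ν : ℂ) * Vl (if s = 1/2 then 1 else 0) ((τ : ℂ) + Complex.I / 2)]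

/-!
A matrix `Aᴴ * A - t • 1` of size two is positive semidefinite iff `t` lies to the left of both
roots of the characteristic polynomial of `Aᴴ * A`. For `A = Mmat ν s τ` this polynomial is rational
in `ν` and `τ`, because `V_l(z) V_{l+1}(z) ((l+1)² + z²) = 1` and `|V_l(τ + i/2)|²` is rational
in `τ`.

With `F(z) = z cot(πz/2)` one has `(1 + 4τ²) K^ν(τ) = 4 |F(1/2 - iτ) - F(Υ_ν)|²`. The partial
fraction series of the cotangent gives `|F(z) - F(u)| ≤ c(u²) |z² - u²|` when `Re z² ≤ 1/4`, with
equality at `z = 1/2`, and `η_ν = 2 / (c(Υ_ν²) (√(9 + 4ν²) + 4ν))`. This bound on `K` suffices when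
`1 + 4τ² ≤ 16ν²`; for larger `τ` one uses instead `(1 + 4τ²) K^ν(τ) ≤ 4τ² + (1 - 2w_ν)²`, which is
also an equality at `τ = 0`. Maximality follows from `τ = 0`, except for `ν² = 3/4`: there
`K^ν(0) = 0`, and one compares the smaller eigenvalue, asymptotically `τ²/3`, with `η² K^ν(τ)` as
`τ → 0`.
-/

/-! ### Lower bounds for the roots of a quadratic -/

/-- `t` lies at or to the left of both roots of `P * X ^ 2 - 2 * T * X + N`, phrased for `0 < P`
through the vertex and the value at `t` so that no square root has to be taken. -/
def IsLeRoots (P T N t : ℝ) : Prop :=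
  P * t ≤ T ∧ 0 ≤ P * t ^ 2 - 2 * T * t + N

namespace IsLeRoots

variable {P T N s t : ℝ}

theorem mono (hP : 0 ≤ P) (ht : IsLeRoots P T N t) (hst : s ≤ t) : IsLeRoots P T N s := by
  obtain ⟨hvertex, hvalue⟩ := ht
  have hPs : P * s ≤ P * t := mul_le_mul_of_nonneg_left hst hP
  refine ⟨hPs.trans hvertex, hvalue.trans ?_⟩
  have h : 0 ≤ (t - s) * (2 * T - P * t - P * s) :=
    mul_nonneg (by linarith) (by linarith)
  linarith

theorem div_iff (hP : 0 < P) : IsLeRoots 1 (T / P) (N / P) t ↔ IsLeRoots P T N t := by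
  have hvalue : P * t ^ 2 - 2 * T * t + N
      = P * (1 * t ^ 2 - 2 * (T / P) * t + N / P) := by field_simp
  rw [IsLeRoots, IsLeRoots, one_mul, le_div_iff₀ hP, mul_comm t, hvalue,
    mul_nonneg_iff_of_pos_left hP]

/-- The reciprocal roots are those of `N * X ^ 2 - 2 * T * X + P`; here `m / N` lies to the right
of them. -/
theorem of_mul_le {m : ℝ} (hP : 0 < P) (hT : 0 < T) (hN : 0 ≤ N) (hdisc : N * P ≤ T ^ 2)
    (hTm : T ≤ m) (hm : 0 ≤ m ^ 2 - 2 * T * m + N * P) (ht : t * m ≤ N) :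
    IsLeRoots P T N t := by
  have hm0 : 0 < m := hT.trans_le hTm
  refine mono hP.le ⟨?_, ?_⟩ ((le_div_iff₀ hm0).2 ht)
  · rw [mul_div_assoc', div_le_iff₀ hm0]
    nlinarith
  · have hvalue : P * (N / m) ^ 2 - 2 * T * (N / m) + N
        = N * (m ^ 2 - 2 * T * m + N * P) / m ^ 2 := by field_simp; ring
    rw [hvalue]
    positivity

end IsLeRoots

/-! ### Two by two matrices -/

theorem posSemidef_fin_two_iff {A : Matrix (Fin 2) (Fin 2) ℂ} (hA : A.IsHermitian) :
    A.PosSemidef ↔ 0 ≤ A.trace.re ∧ 0 ≤ A.det.re := by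
  have htrace : A.trace.re = hA.eigenvalues 0 + hA.eigenvalues 1 := by
    simp [hA.trace_eq_sum_eigenvalues]
  have hdet : A.det.re = hA.eigenvalues 0 * hA.eigenvalues 1 := by
    simp [hA.det_eq_prod_eigenvalues]
  rw [hA.posSemidef_iff_eigenvalues_nonneg, htrace, hdet, Pi.le_def, Fin.forall_fin_two]
  refine ⟨fun ⟨h0, h1⟩ => ⟨add_nonneg h0 h1, mul_nonneg h0 h1⟩, fun ⟨hadd, hmul⟩ => ?_⟩
  rcases mul_nonneg_iff.1 hmul with h | h
  · exact h
  · exact ⟨by simp only [Pi.zero_apply]; linarith [hadd],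
      by simp only [Pi.zero_apply]; linarith [hadd]⟩

theorem posSemidef_gram_sub_smul_one_iff (A : Matrix (Fin 2) (Fin 2) ℂ) (t : ℝ) :
    (Aᴴ * A - (t : ℂ) • (1 : Matrix (Fin 2) (Fin 2) ℂ)).PosSemidef ↔
      IsLeRoots 1 ((∑ i, ∑ j, Complex.normSq (A i j)) / 2) (Complex.normSq A.det) t := by
  have hherm : (Aᴴ * A - (t : ℂ) • (1 : Matrix (Fin 2) (Fin 2) ℂ)).IsHermitian :=
    (isHermitian_conjTranspose_mul_self A).sub <| by
      simp [IsHermitian, conjTranspose_smul]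
  have htrace : (Aᴴ * A - (t : ℂ) • (1 : Matrix (Fin 2) (Fin 2) ℂ)).trace.re
      = ∑ i, ∑ j, Complex.normSq (A i j) - 2 * t := by
    simp only [Complex.coe_smul, trace_sub, trace_fin_two, Fin.isValue, mul_apply,
      conjTranspose_apply, RCLike.star_def, Fin.sum_univ_two, trace_smul, trace_one,
      Fintype.card_fin, Nat.cast_ofNat, Complex.real_smul, Complex.sub_re, Complex.add_re,
      Complex.mul_re, Complex.conj_re, Complex.conj_im, neg_mul, sub_neg_eq_add, Complex.ofReal_re,
      Complex.re_ofNat, Complex.ofReal_im, Complex.im_ofNat, mul_zero, sub_zero,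
      Complex.normSq_apply]
    ring
  have hdet : (Aᴴ * A - (t : ℂ) • (1 : Matrix (Fin 2) (Fin 2) ℂ)).det.re
      = t ^ 2 - (∑ i, ∑ j, Complex.normSq (A i j)) * t + Complex.normSq A.det := by
    simp only [Complex.coe_smul, det_fin_two, Fin.isValue, Matrix.sub_apply, mul_apply,
      conjTranspose_apply, RCLike.star_def, Fin.sum_univ_two, Matrix.smul_apply, one_apply_eq,
      Complex.real_smul, mul_one, ne_eq, zero_ne_one, not_false_eq_true, one_apply_ne, smul_zero,
      sub_zero, one_ne_zero, Complex.sub_re, Complex.mul_re, Complex.add_re, Complex.conj_re,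
      Complex.conj_im, neg_mul, sub_neg_eq_add, Complex.ofReal_re, Complex.sub_im, Complex.add_im,
      Complex.mul_im, Complex.ofReal_im, Complex.normSq_apply]
    ring
  rw [posSemidef_fin_two_iff hherm, htrace, hdet, IsLeRoots]
  constructor <;> rintro ⟨h1, h2⟩ <;> constructor <;> linarith

/-! ### The entries of `Mmat` -/

theorem Vl_mul_Vl_succ (l : ℕ) {z : ℂ} (hz : |z.im| < l + 1) :
    Vl l z * Vl (l + 1) z = ((l + 1) ^ 2 + z ^ 2)⁻¹ := by
  obtain ⟨him, him'⟩ := abs_lt.1 hz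
  set A : ℂ := (l + 1 + Complex.I * z) / 2 with hA
  set B : ℂ := (l + 1 - Complex.I * z) / 2 with hB
  have hAre : 0 < A.re := by
    simp only [hA, Complex.div_ofNat_re, Complex.add_re, Complex.natCast_re, Complex.one_re,
      Complex.mul_re, Complex.I_re, zero_mul, Complex.I_im, one_mul, zero_sub, Nat.ofNat_pos,
      div_pos_iff_of_pos_right, lt_add_neg_iff_add_lt, zero_add]
    linarith
  have hBre : 0 < B.re := by
    simp only [hB, Complex.div_ofNat_re, Complex.sub_re, Complex.add_re, Complex.natCast_re,
      Complex.one_re, Complex.mul_re, Complex.I_re, zero_mul, Complex.I_im, one_mul, zero_sub,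
      sub_neg_eq_add, Nat.ofNat_pos, div_pos_iff_of_pos_right]
    linarith
  have hA0 : A ≠ 0 := fun h => by simp [h] at hAre
  have hB0 : B ≠ 0 := fun h => by simp [h] at hBre
  have hΓ : ∀ {C : ℂ}, 0 < C.re → Complex.Gamma C ≠ 0 ∧ Complex.Gamma (C + 1 / 2) ≠ 0 :=
    fun hC => ⟨Complex.Gamma_ne_zero_of_re_pos hC,
      Complex.Gamma_ne_zero_of_re_pos (by rw [Complex.add_re]; norm_num; linarith)⟩
  have hAB : ((l : ℂ) + 1) ^ 2 + z ^ 2 = 4 * A * B := by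
    rw [hA, hB]; linear_combination z ^ 2 * Complex.I_sq
  have hVl : Vl l z = Complex.Gamma A * Complex.Gamma B /
      (2 * Complex.Gamma (A + 1 / 2) * Complex.Gamma (B + 1 / 2)) := by
    rw [Vl, hA, hB]; ring_nf
  have hVl_succ : Vl (l + 1) z = Complex.Gamma (A + 1 / 2) * Complex.Gamma (B + 1 / 2) /
      (2 * (A * Complex.Gamma A) * (B * Complex.Gamma B)) := by
    rw [Vl, ← Complex.Gamma_add_one A hA0, ← Complex.Gamma_add_one B hB0, hA, hB]
    push_cast; ring_nf
  obtain ⟨⟨hΓA, hΓA'⟩, hΓB, hΓB'⟩ := And.intro (hΓ hAre) (hΓ hBre)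
  rw [hVl, hVl_succ, hAB]
  generalize Complex.Gamma (A + 1 / 2) = a at *
  generalize Complex.Gamma (B + 1 / 2) = b at *
  field_simp
  norm_num

theorem normSq_Vl (l : ℕ) (τ : ℝ) :
    Complex.normSq (Vl l (τ + Complex.I / 2)) = 4 / ((2 * l + 1) ^ 2 + 4 * τ ^ 2) := by
  set ζ : ℂ := ⟨(l + 1 / 2) / 2, τ / 2⟩ with hζ
  have hζ_pos : 0 < ζ.re := by rw [hζ]; positivity
  have hζ0 : ζ ≠ 0 := fun h => by simp [h] at hζ_pos
  have hΓ : Complex.Gamma ζ ≠ 0 := Complex.Gamma_ne_zero_of_re_pos hζ_pos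
  have hΓ' : Complex.Gamma (ζ + 1 / 2) ≠ 0 :=
    Complex.Gamma_ne_zero_of_re_pos (by rw [Complex.add_re]; norm_num; linarith)
  have hVl : Vl l (τ + Complex.I / 2)
      = Complex.Gamma ζ * starRingEnd ℂ (Complex.Gamma (ζ + 1 / 2)) /
        (2 * Complex.Gamma (ζ + 1 / 2) * starRingEnd ℂ (ζ * Complex.Gamma ζ)) := by
    rw [← Complex.Gamma_add_one ζ hζ0, ← Complex.Gamma_conj, ← Complex.Gamma_conj, Vl]
    congr 3 <;> [skip; skip; congr 2; skip] <;> apply Complex.ext <;> simp [hζ] <;> ring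
  have hnormSq_ζ : Complex.normSq ζ = ((2 * l + 1) ^ 2 + 4 * τ ^ 2) / 16 := by
    rw [Complex.normSq_apply, hζ]; ring
  rw [hVl]
  simp only [map_div₀, map_mul, Complex.normSq_conj, hnormSq_ζ]
  have hpos := Complex.normSq_pos.2 hΓ
  have hpos' := Complex.normSq_pos.2 hΓ'
  generalize Complex.normSq (Complex.Gamma (ζ + 1 / 2)) = a at *
  field_simp
  norm_num

/-- With `x = 4 * τ ^ 2`, the numbers `t` below both eigenvalues of `(Mmat ν s τ)ᴴ * Mmat ν s τ`,
whose characteristic polynomial is written here with the denominator `(1 + x) * (9 + x)` cleared;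
it does not depend on `s`. -/
def IsLeGramEigenvalues (ν x t : ℝ) : Prop :=
  IsLeRoots ((1 + x) * (9 + x)) ((1 + x) * (9 + x) + 4 * ν ^ 2 * (5 + x))
    ((3 - 4 * ν ^ 2 + x) ^ 2 + 4 * x) t

theorem normSq_one_add_sq (τ : ℝ) :
    Complex.normSq (1 + (τ + Complex.I / 2) ^ 2) = (1 + 4 * τ ^ 2) * (9 + 4 * τ ^ 2) / 16 := by
  simp only [pow_two, Complex.normSq_apply, Complex.add_re, Complex.one_re, Complex.mul_re,
    Complex.ofReal_re, Complex.div_ofNat_re, Complex.I_re, zero_div, add_zero, Complex.add_im,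
    Complex.ofReal_im, Complex.div_ofNat_im, Complex.I_im, one_div, zero_add, Complex.one_im,
    Complex.mul_im]
  ring

theorem sum_normSq_Mmat (ν s τ : ℝ) :
    (∑ i, ∑ j, Complex.normSq (Mmat ν s τ i j)) / 2 =
      ((1 + 4 * τ ^ 2) * (9 + 4 * τ ^ 2) + 4 * ν ^ 2 * (5 + 4 * τ ^ 2)) /
        ((1 + 4 * τ ^ 2) * (9 + 4 * τ ^ 2)) := by
  unfold Mmat
  split_ifs <;>
    simp only [neg_mul, of_apply, cons_val', cons_val_fin_one, Fin.sum_univ_two, Fin.isValue,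
      cons_val_zero, cons_val_one, Complex.normSq_neg, map_mul, Complex.normSq_ofReal, normSq_Vl,
      CharP.cast_eq_zero, Nat.cast_one, mul_one, mul_zero, zero_add, one_pow, map_one] <;>
    field_simp <;>
    ring

theorem normSq_det_Mmat (ν s τ : ℝ) :
    Complex.normSq (Mmat ν s τ).det =
      ((3 - 4 * ν ^ 2 + 4 * τ ^ 2) ^ 2 + 4 * (4 * τ ^ 2)) /
        ((1 + 4 * τ ^ 2) * (9 + 4 * τ ^ 2)) := by
  have hV : Vl 0 (τ + Complex.I / 2) * Vl 1 (τ + Complex.I / 2)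
      = (1 + (τ + Complex.I / 2) ^ 2)⁻¹ := by
    simpa using Vl_mul_Vl_succ 0 (z := τ + Complex.I / 2) (by norm_num)
  have h0 : (1 + (τ + Complex.I / 2) ^ 2 : ℂ) ≠ 0 := by
    rw [← Complex.normSq_pos, normSq_one_add_sq]; positivity
  have hdet : (Mmat ν s τ).det
      = (ν ^ 2 - (1 + (τ + Complex.I / 2) ^ 2)) / (1 + (τ + Complex.I / 2) ^ 2) := by
    rw [sub_div, div_self h0, div_eq_mul_inv, ← hV, Mmat, det_fin_two]
    split_ifs <;> simp <;> ring
  have hnum : Complex.normSq (ν ^ 2 - (1 + (τ + Complex.I / 2) ^ 2))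
      = ((3 - 4 * ν ^ 2 + 4 * τ ^ 2) ^ 2 + 4 * (4 * τ ^ 2)) / 16 := by
    simp only [pow_two, Complex.normSq_apply, Complex.add_re, Complex.one_re, Complex.mul_re,
      Complex.ofReal_re, Complex.div_ofNat_re, Complex.I_re, zero_div, add_zero, Complex.add_im,
      Complex.ofReal_im, Complex.div_ofNat_im, Complex.I_im, one_div, zero_add, Complex.one_im,
      Complex.mul_im, Complex.sub_re, mul_zero, sub_zero, Complex.sub_im, zero_mul, zero_sub,
      neg_add_rev]
    ring
  rw [hdet, map_div₀, hnum, normSq_one_add_sq, div_div_div_cancel_right₀ (by norm_num)]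

theorem posSemidef_Mmat_gram_sub_iff (ν s τ t : ℝ) :
    ((Mmat ν s τ)ᴴ * Mmat ν s τ - (t : ℂ) • (1 : Matrix (Fin 2) (Fin 2) ℂ)).PosSemidef ↔
      IsLeGramEigenvalues ν (4 * τ ^ 2) t := by
  rw [posSemidef_gram_sub_smul_one_iff, sum_normSq_Mmat, normSq_det_Mmat,
    IsLeRoots.div_iff (by positivity), IsLeGramEigenvalues]

/-! ### Partial fractions of `z * cot (π * z / 2)` -/

/-- The function `z * cot (π * z / 2)`, continuously extended to `z = 0`; its value at `Ups ν` is
`w ν`. -/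
noncomputable def mulCot (z : ℂ) : ℂ :=
  if z = 0 then 2 / Real.pi else z * Complex.cot (Real.pi * z / 2)

/-- The general term of the partial fraction series for `cotCoeff`. -/
noncomputable def cotSummand (v : ℝ) (n : ℕ) : ℝ :=
  ((n : ℝ) + 1) ^ 2 / ((4 * ((n : ℝ) + 1) ^ 2 - v) * (4 * ((n : ℝ) + 1) ^ 2 - 1 / 4))

/-- The slope of `v ↦ -mulCot (√v)` between `1 / 4` and `v`. -/
noncomputable def cotCoeff (v : ℝ) : ℝ :=
  16 / Real.pi * ∑' n : ℕ, cotSummand v n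

theorem one_le_succ_sq (n : ℕ) : (1 : ℝ) ≤ ((n : ℝ) + 1) ^ 2 :=
  one_le_pow₀ (by linarith [n.cast_nonneg (α := ℝ)])

theorem four_mul_succ_sq_ne_of_re_lt {z : ℂ} (hz : z.re < 4) (n : ℕ) :
    4 * ((n : ℂ) + 1) ^ 2 - z ≠ 0 := by
  intro h
  have hre : (4 * ((n : ℂ) + 1) ^ 2 - z).re = 4 * ((n : ℝ) + 1) ^ 2 - z.re := by
    norm_cast
  have := one_le_succ_sq n
  rw [h, Complex.zero_re] at hre
  linarith

theorem half_mem_integerComplement {z : ℂ} (hz0 : z ≠ 0)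
    (hz : ∀ n : ℕ, 4 * ((n : ℂ) + 1) ^ 2 - z ^ 2 ≠ 0) : z / 2 ∈ Complex.integerComplement := by
  rintro ⟨k, hk⟩
  have hzk : z = 2 * k := by rw [hk]; ring
  have hk0 : k ≠ 0 := by rintro rfl; simp [hzk] at hz0
  obtain ⟨n, hn⟩ := Nat.exists_eq_succ_of_ne_zero (Int.natAbs_ne_zero.2 hk0)
  refine hz n ?_
  have hsq : ((n : ℤ) + 1) ^ 2 = k ^ 2 := by
    rw [← Int.natAbs_sq k, hn]; push_cast; ring
  have hsqC : ((n : ℂ) + 1) ^ 2 = k ^ 2 := by exact_mod_cast hsq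
  rw [hsqC, hzk]
  ring

theorem hasSum_mulCot {z : ℂ} (hz : ∀ n : ℕ, 4 * ((n : ℂ) + 1) ^ 2 - z ^ 2 ≠ 0) :
    HasSum (fun n : ℕ => -(4 * z ^ 2 / (4 * ((n : ℂ) + 1) ^ 2 - z ^ 2)))
      (Real.pi * mulCot z - 2) := by
  have hπ : (Real.pi : ℂ) ≠ 0 := by exact_mod_cast Real.pi_ne_zero
  rcases eq_or_ne z 0 with rfl | hz0
  · simp [mulCot, mul_div_cancel₀ _ hπ]
  have hmem := half_mem_integerComplement hz0 hz
  have hcot := (summable_cotTerm hmem).hasSum.mul_left z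
  have hsum : ∑' n : ℕ, cotTerm (z / 2) n
      = Real.pi * Complex.cot (Real.pi * (z / 2)) - 1 / (z / 2) := (cot_series_rep' hmem).symm
  have hvalue : z * ∑' n : ℕ, cotTerm (z / 2) n = Real.pi * mulCot z - 2 := by
    rw [hsum, mulCot, if_neg hz0]
    field_simp
  have hterm (n : ℕ) :
      -(4 * z ^ 2 / (4 * ((n : ℂ) + 1) ^ 2 - z ^ 2)) = z * cotTerm (z / 2) n := by
    have hprod : (z / 2 + (n + 1)) * (z / 2 - (n + 1))
        = -(4 * ((n : ℂ) + 1) ^ 2 - z ^ 2) / 4 := by ring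
    rw [cotTerm_identity hmem, hprod]
    field_simp
  rw [funext hterm, ← hvalue]
  exact hcot

theorem hasSum_mulCot_sub {z u : ℂ} (hz : ∀ n : ℕ, 4 * ((n : ℂ) + 1) ^ 2 - z ^ 2 ≠ 0)
    (hu : ∀ n : ℕ, 4 * ((n : ℂ) + 1) ^ 2 - u ^ 2 ≠ 0) :
    HasSum (fun n : ℕ => 16 * (u ^ 2 - z ^ 2) * (((n : ℂ) + 1) ^ 2 /
        ((4 * ((n : ℂ) + 1) ^ 2 - u ^ 2) * (4 * ((n : ℂ) + 1) ^ 2 - z ^ 2))))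
      (Real.pi * (mulCot z - mulCot u)) := by
  have hsub := (hasSum_mulCot hz).sub (hasSum_mulCot hu)
  have hterm (n : ℕ) :
      -(4 * z ^ 2 / (4 * ((n : ℂ) + 1) ^ 2 - z ^ 2))
          - -(4 * u ^ 2 / (4 * ((n : ℂ) + 1) ^ 2 - u ^ 2))
        = 16 * (u ^ 2 - z ^ 2) * (((n : ℂ) + 1) ^ 2 /
          ((4 * ((n : ℂ) + 1) ^ 2 - u ^ 2) * (4 * ((n : ℂ) + 1) ^ 2 - z ^ 2))) := by
    have := hz n
    have := hu n
    field_simp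
    ring
  simpa only [hterm, sub_sub_sub_cancel_right, ← mul_sub] using hsub

theorem summable_cotSummand {v : ℝ} (hv : v < 4) : Summable (cotSummand v) := by
  have hmax : max v 0 < 4 := max_lt hv (by norm_num)
  have hsq : Summable fun n : ℕ => 1 / ((n : ℝ) + 1) ^ 2 := by
    simpa using (summable_nat_add_iff 1).2 (Real.summable_one_div_nat_pow.2 one_lt_two)
  refine (hsq.mul_left (4 - max v 0)⁻¹).of_nonneg_of_le (fun n => ?_) fun n => ?_
  all_goals
    have hn := one_le_succ_sq n
    have hvn : v ≤ max v 0 * ((n : ℝ) + 1) ^ 2 :=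
      (le_max_left v 0).trans (le_mul_of_one_le_right (le_max_right v 0) hn)
  · exact div_nonneg (by positivity) (mul_nonneg (by nlinarith) (by linarith))
  · have hden : (4 - max v 0) * ((n : ℝ) + 1) ^ 2 * ((n : ℝ) + 1) ^ 2
        ≤ (4 * ((n : ℝ) + 1) ^ 2 - v) * (4 * ((n : ℝ) + 1) ^ 2 - 1 / 4) :=
      mul_le_mul (by linarith) (by linarith) (by positivity) (by nlinarith)
    calc cotSummand v n
        ≤ ((n : ℝ) + 1) ^ 2 / ((4 - max v 0) * ((n : ℝ) + 1) ^ 2 * ((n : ℝ) + 1) ^ 2) :=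
          div_le_div_of_nonneg_left (by positivity) (by positivity) hden
      _ = (4 - max v 0)⁻¹ * (1 / ((n : ℝ) + 1) ^ 2) := by
          field_simp

theorem cotCoeff_mono {v v' : ℝ} (hv : v ≤ v') (hv' : v' < 4) : cotCoeff v ≤ cotCoeff v' := by
  refine mul_le_mul_of_nonneg_left ?_ (by positivity)
  refine (summable_cotSummand (hv.trans_lt hv')).tsum_le_tsum (fun n => ?_)
    (summable_cotSummand hv')
  have hn := one_le_succ_sq n
  exact div_le_div_of_nonneg_left (by positivity) (mul_pos (by linarith) (by linarith))
    (mul_le_mul_of_nonneg_right (by linarith) (by linarith))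

theorem four_sub_mul_cotCoeff_anti {v v' : ℝ} (hv : v ≤ v') (hv' : v' < 4) :
    (4 - v') * cotCoeff v' ≤ (4 - v) * cotCoeff v := by
  have hterm (n : ℕ) : (4 - v') * cotSummand v' n ≤ (4 - v) * cotSummand v n := by
    have hn := one_le_succ_sq n
    have h : 0 < 4 * ((n : ℝ) + 1) ^ 2 - v := by linarith
    have h' : 0 < 4 * ((n : ℝ) + 1) ^ 2 - v' := by linarith
    have hq : 0 < 4 * ((n : ℝ) + 1) ^ 2 - 1 / 4 := by linarith
    simp only [cotSummand, ← div_div, mul_div_assoc']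
    refine div_le_div_of_nonneg_right ?_ hq.le
    rw [div_le_div_iff₀ h' h]
    nlinarith [mul_nonneg (sub_nonneg.2 hv) (sub_nonneg.2 hn)]
  have hsum := ((summable_cotSummand hv').mul_left (4 - v')).tsum_le_tsum hterm
    ((summable_cotSummand (hv.trans_lt hv')).mul_left (4 - v))
  rw [tsum_mul_left, tsum_mul_left] at hsum
  rw [cotCoeff, cotCoeff, mul_left_comm, mul_left_comm (4 - v)]
  exact mul_le_mul_of_nonneg_left hsum (by positivity)

theorem norm_mulCot_sub_le {z : ℂ} (hz : (z ^ 2).re ≤ 1 / 4) {u : ℝ} (hu : u ^ 2 < 4) :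
    ‖mulCot z - mulCot u‖ ≤ cotCoeff (u ^ 2) * ‖z ^ 2 - (u : ℂ) ^ 2‖ := by
  have hure : ((u : ℂ) ^ 2).re < 4 := by norm_cast
  have hsum := hasSum_mulCot_sub (four_mul_succ_sq_ne_of_re_lt (by linarith : (z ^ 2).re < 4))
    (four_mul_succ_sq_ne_of_re_lt hure)
  have hmajorant := (summable_cotSummand hu).hasSum.mul_left (16 * ‖z ^ 2 - (u : ℂ) ^ 2‖)
  have hterm (n : ℕ) : ‖16 * ((u : ℂ) ^ 2 - z ^ 2) * (((n : ℂ) + 1) ^ 2 /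
        ((4 * ((n : ℂ) + 1) ^ 2 - (u : ℂ) ^ 2) * (4 * ((n : ℂ) + 1) ^ 2 - z ^ 2)))‖
      ≤ 16 * ‖z ^ 2 - (u : ℂ) ^ 2‖ * cotSummand (u ^ 2) n := by
    have hn := one_le_succ_sq n
    have hu_norm : ‖4 * ((n : ℂ) + 1) ^ 2 - (u : ℂ) ^ 2‖ = 4 * ((n : ℝ) + 1) ^ 2 - u ^ 2 := by
      rw [← Complex.norm_of_nonneg (by linarith : 0 ≤ 4 * ((n : ℝ) + 1) ^ 2 - u ^ 2)]
      push_cast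
      rfl
    have hz_norm : 4 * ((n : ℝ) + 1) ^ 2 - 1 / 4 ≤ ‖4 * ((n : ℂ) + 1) ^ 2 - z ^ 2‖ := by
      refine le_trans ?_ (Complex.re_le_norm _)
      have hre : (4 * ((n : ℂ) + 1) ^ 2 - z ^ 2).re = 4 * ((n : ℝ) + 1) ^ 2 - (z ^ 2).re := by
        norm_cast
      linarith
    have hn_norm : ‖((n : ℂ) + 1) ^ 2‖ = ((n : ℝ) + 1) ^ 2 := by norm_cast
    rw [norm_mul, norm_mul, norm_div, norm_mul, hu_norm, hn_norm, norm_sub_rev (z ^ 2), cotSummand,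
      Complex.norm_ofNat]
    gcongr
    · exact mul_pos (by linarith) (by linarith)
    · linarith
  have hbound := hsum.norm_le_of_bounded hmajorant hterm
  rw [norm_mul, Complex.norm_of_nonneg Real.pi_pos.le, ← le_div_iff₀' Real.pi_pos] at hbound
  exact hbound.trans_eq (by rw [cotCoeff]; ring)

theorem mulCot_ofReal {u : ℝ} (hu : u ≠ 0) :
    mulCot u = ((u * Real.cot (Real.pi * u / 2) : ℝ) : ℂ) := by
  rw [mulCot, if_neg (by exact_mod_cast hu)]
  push_cast
  rfl

theorem cot_pi_div_four : Real.cot (Real.pi / 4) = 1 := by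
  rw [Real.cot_eq_cos_div_sin, Real.cos_pi_div_four, Real.sin_pi_div_four, div_self (by positivity)]

theorem mulCot_half : mulCot (1 / 2 : ℝ) = (1 / 2 : ℝ) := by
  rw [mulCot_ofReal (by norm_num), show Real.pi * (1 / 2) / 2 = Real.pi / 4 by ring,
    cot_pi_div_four, mul_one]

theorem mulCot_half_sub {u : ℝ} (hu : u ^ 2 < 4) :
    mulCot (1 / 2 : ℝ) - mulCot u = ((cotCoeff (u ^ 2) * (u ^ 2 - 1 / 4) : ℝ) : ℂ) := by
  have hsum := hasSum_mulCot_sub (z := (1 / 2 : ℝ)) (u := u)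
    (four_mul_succ_sq_ne_of_re_lt (by norm_cast; norm_num))
    (four_mul_succ_sq_ne_of_re_lt (by norm_cast))
  have hreal := Complex.hasSum_ofReal.2
    ((summable_cotSummand hu).hasSum.mul_left (16 * (u ^ 2 - 1 / 4)))
  have hvalue : (Real.pi : ℂ) * (mulCot (1 / 2 : ℝ) - mulCot u)
      = ((16 * (u ^ 2 - 1 / 4) * ∑' n, cotSummand (u ^ 2) n : ℝ) : ℂ) := by
    refine hsum.unique ?_
    convert hreal using 2 with n
    simp only [cotSummand]
    push_cast
    norm_num
  have hπ : (Real.pi : ℂ) ≠ 0 := by exact_mod_cast Real.pi_ne_zero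
  rw [← mul_right_inj' hπ, hvalue, cotCoeff, ← Complex.ofReal_mul]
  congr 1
  field_simp

theorem Ups_sq {ν : ℝ} (hν : ν ∈ Set.Icc (0 : ℝ) 1) : Ups ν ^ 2 = 1 - ν ^ 2 :=
  Real.sq_sqrt (by nlinarith [hν.1, hν.2])

theorem mulCot_Ups {ν : ℝ} (hν : ν ∈ Set.Icc (0 : ℝ) 1) : mulCot (Ups ν) = w ν := by
  rcases hν.2.eq_or_lt with rfl | hlt
  · simp [mulCot, w, Ups]
  · have hUps : Ups ν ≠ 0 := (Real.sqrt_pos.2 (by nlinarith [hν.1])).ne'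
    rw [mulCot_ofReal hUps, w, if_neg hlt.ne]

theorem w_zero : w 0 = 0 := by
  simp [w, Ups, Real.cot_eq_cos_div_sin]

theorem w_nonneg (ν : ℝ) : 0 ≤ w ν := by
  have hle : Ups ν ≤ 1 := by
    rw [Ups, Real.sqrt_le_one]; nlinarith
  have hangle : Real.pi * Ups ν / 2 ≤ Real.pi / 2 := by nlinarith [Real.pi_pos]
  have hangle0 : 0 ≤ Real.pi * Ups ν / 2 := by unfold Ups; positivity
  rw [w]
  split_ifs
  · positivity
  · rw [Real.cot_eq_cos_div_sin]
    exact mul_nonneg (Real.sqrt_nonneg _) (div_nonneg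
      (Real.cos_nonneg_of_neg_pi_div_two_le_of_le (by linarith) hangle)
      (Real.sin_nonneg_of_nonneg_of_le_pi hangle0 (by linarith)))

theorem half_sub_w {ν : ℝ} (hν : ν ∈ Set.Icc (0 : ℝ) 1) :
    1 / 2 - w ν = cotCoeff (1 - ν ^ 2) * (3 / 4 - ν ^ 2) := by
  have hUps := Ups_sq hν
  have h := mulCot_half_sub (u := Ups ν) (by nlinarith [hν.1])
  rw [mulCot_Ups hν, mulCot_half, hUps, ← Complex.ofReal_sub, Complex.ofReal_inj] at h
  linarith

theorem cotCoeff_one : cotCoeff 1 = 2 / 3 := by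
  have h := half_sub_w (ν := 0) ⟨le_rfl, zero_le_one⟩
  norm_num [w_zero] at h
  linarith

theorem two_div_le_cotCoeff (ν : ℝ) : 2 / (3 + ν ^ 2) ≤ cotCoeff (1 - ν ^ 2) := by
  have h := four_sub_mul_cotCoeff_anti (v := 1 - ν ^ 2) (v' := 1) (by nlinarith) (by norm_num)
  rw [cotCoeff_one] at h
  rw [div_le_iff₀ (by positivity)]
  linarith

theorem cotCoeff_pos (ν : ℝ) : 0 < cotCoeff (1 - ν ^ 2) :=
  lt_of_lt_of_le (by positivity) (two_div_le_cotCoeff ν)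

theorem hasDerivAt_mulCot {z : ℂ} (hz : z ≠ 0) (hsin : Complex.sin (Real.pi * z / 2) ≠ 0) :
    HasDerivAt mulCot (Complex.cot (Real.pi * z / 2)
      - Real.pi * z / 2 / Complex.sin (Real.pi * z / 2) ^ 2) z := by
  have hangle : HasDerivAt (fun z : ℂ => Real.pi * z / 2) (Real.pi / 2) z := by
    simpa using ((hasDerivAt_id z).const_mul (Real.pi : ℂ)).div_const 2
  have hmul := (hasDerivAt_id z).mul (hangle.ccos.div hangle.csin hsin)
  have heq : mulCot =ᶠ[nhds z] fun z => id z *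
      (Complex.cos (Real.pi * z / 2) / Complex.sin (Real.pi * z / 2)) := by
    filter_upwards [isOpen_ne.mem_nhds hz] with u hu
    rw [mulCot, if_neg hu, Complex.cot_eq_cos_div_sin, id]
  refine (hmul.congr_of_eventuallyEq heq).congr_deriv ?_
  rw [Complex.cot_eq_cos_div_sin, id, Pi.div_apply]
  field_simp
  linear_combination (-Real.pi * z) * Complex.sin_sq_add_cos_sq (Real.pi * z / 2)

theorem hasDerivAt_mulCot_half :
    HasDerivAt mulCot ((1 - Real.pi / 2 : ℝ) : ℂ) (1 / 2 : ℝ) := by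
  have hangle : (Real.pi : ℂ) * (1 / 2 : ℝ) / 2 = ((Real.pi / 4 : ℝ) : ℂ) := by
    push_cast; ring
  have hsin : Real.sin (Real.pi / 4) ^ 2 = 1 / 2 := by
    rw [Real.sin_pi_div_four, div_pow, Real.sq_sqrt zero_le_two]; norm_num
  have hsin0 : Real.sin (Real.pi / 4) ≠ 0 := fun h => by norm_num [h] at hsin
  have h := hasDerivAt_mulCot (z := (1 / 2 : ℝ)) (by norm_num)
    (by rw [hangle]; exact_mod_cast hsin0)
  rw [hangle] at h
  convert h using 1
  rw [← Complex.ofReal_cot, cot_pi_div_four, ← Complex.ofReal_sin, ← Complex.ofReal_pow, hsin]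
  push_cast
  ring

theorem cotCoeff_quarter : cotCoeff (1 / 4) = (Real.pi - 2) / 2 := by
  let g : ℝ → ℝ := fun u => (mulCot u).re + cotCoeff (1 / 4) * u ^ 2
  have hderiv : HasDerivAt g (1 - Real.pi / 2 + cotCoeff (1 / 4)) (1 / 2) := by
    have h := hasDerivAt_mulCot_half.real_of_complex.add
      (((hasDerivAt_id (1 / 2 : ℝ)).pow 2).const_mul (cotCoeff (1 / 4)))
    rw [Complex.ofReal_re] at h
    exact h.congr_deriv (by norm_num)
  have hmax : IsLocalMax g (1 / 2) := by
    filter_upwards [Ioo_mem_nhds (by norm_num : (0 : ℝ) < 1 / 2) one_half_lt_one] with u hu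
    have hu4 : u ^ 2 < 4 := by nlinarith [hu.1, hu.2]
    have hsub := congrArg Complex.re (mulCot_half_sub hu4)
    rw [Complex.sub_re, Complex.ofReal_re] at hsub
    have hgap : g (1 / 2) - g u = (cotCoeff (u ^ 2) - cotCoeff (1 / 4)) * (u ^ 2 - 1 / 4) := by
      simp only [g]; linarith
    have : 0 ≤ g (1 / 2) - g u := by
      rw [hgap]
      rcases le_total (u ^ 2) (1 / 4) with h | h
      · exact mul_nonneg_of_nonpos_of_nonpos
          (sub_nonpos.2 (cotCoeff_mono h (by norm_num))) (sub_nonpos.2 h)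
      · exact mul_nonneg (sub_nonneg.2 (cotCoeff_mono h hu4)) (sub_nonneg.2 h)
    linarith
  linarith [hmax.hasDerivAt_eq_zero hderiv]

/-! ### Bounds for `Kf` -/

theorem mulCot_half_sub_I_mul (τ : ℝ) :
    mulCot (1 / 2 - Complex.I * τ) = (1 / 2 - Complex.I * τ) *
      ((1 + Complex.I * Real.sinh (Real.pi * τ)) / Real.cosh (Real.pi * τ)) := by
  have h0 : (1 / 2 - Complex.I * τ : ℂ) ≠ 0 := fun h => by
    have := congrArg Complex.re h
    norm_num at this
  rw [mulCot, if_neg h0]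
  congr 1
  set θ : ℂ := Real.pi * (1 / 2 - Complex.I * τ) / 2 with hθ
  have hdouble : 2 * θ = Real.pi / 2 - Real.pi * τ * Complex.I := by rw [hθ]; ring
  have hsin : 2 * Complex.sin θ * Complex.cos θ = Real.cosh (Real.pi * τ) := by
    rw [← Complex.sin_two_mul, hdouble, Complex.sin_pi_div_two_sub, Complex.cos_mul_I]
    push_cast; rfl
  have hcos : 1 + Complex.I * Real.sinh (Real.pi * τ) = 2 * Complex.cos θ ^ 2 := by
    rw [Complex.cos_sq, hdouble, Complex.cos_pi_div_two_sub,
      Complex.sin_mul_I]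
    push_cast; ring
  rw [Complex.cot_eq_cos_div_sin, hcos, ← hsin]
  field_simp

theorem Kf_mul {ν : ℝ} (hν : ν ∈ Set.Icc (0 : ℝ) 1) (τ : ℝ) :
    Kf ν τ * (1 + 4 * τ ^ 2) = 4 * ‖mulCot (1 / 2 - Complex.I * τ) - mulCot (Ups ν)‖ ^ 2 := by
  rw [Kf, div_mul_cancel₀ _ (by positivity), mulCot_half_sub_I_mul, mulCot_Ups hν, Complex.sq_norm,
    Real.tanh_eq_sinh_div_cosh]
  have hC := (Real.cosh_pos (Real.pi * τ)).ne'
  have hsq := Real.cosh_sq (Real.pi * τ)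
  generalize Real.cosh (Real.pi * τ) = C at *
  generalize Real.sinh (Real.pi * τ) = S at *
  have hre_im : (1 / 2 - Complex.I * τ) * ((1 + Complex.I * S) / C) - w ν
      = ⟨(1 / 2 + τ * S) / C - w ν, (S / 2 - τ) / C⟩ := by
    have hC' : (C : ℂ) ≠ 0 := by exact_mod_cast hC
    rw [mul_div_assoc', Complex.mk_eq_add_mul_I]
    push_cast
    field_simp
    linear_combination (-2 * (τ : ℂ) * S) * Complex.I_sq
  rw [hre_im, Complex.normSq_mk]
  field_simp
  linear_combination (4 * (1 + 4 * τ ^ 2)) * hsq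

theorem four_mul_Kf_mul_le {ν : ℝ} (hν : ν ∈ Set.Icc (0 : ℝ) 1) (τ : ℝ) :
    4 * Kf ν τ * (1 + 4 * τ ^ 2) ≤
      cotCoeff (1 - ν ^ 2) ^ 2 * ((3 - 4 * ν ^ 2 + 4 * τ ^ 2) ^ 2 + 4 * (4 * τ ^ 2)) := by
  have hUps := Ups_sq hν
  set z : ℂ := 1 / 2 - Complex.I * τ with hz
  have hz2 : z ^ 2 = ⟨1 / 4 - τ ^ 2, -τ⟩ := by
    rw [hz, Complex.mk_eq_add_mul_I]
    push_cast
    linear_combination (τ : ℂ) ^ 2 * Complex.I_sq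
  have hnorm : ‖z ^ 2 - (Ups ν : ℂ) ^ 2‖ ^ 2
      = ((3 - 4 * ν ^ 2 + 4 * τ ^ 2) ^ 2 + 4 * (4 * τ ^ 2)) / 16 := by
    rw [← Complex.ofReal_pow, hUps, Complex.sq_norm, Complex.normSq_apply, Complex.sub_re,
      Complex.sub_im, hz2, Complex.ofReal_re, Complex.ofReal_im]
    ring
  have hle := norm_mulCot_sub_le (z := z) (u := Ups ν) (by rw [hz2]; nlinarith)
    (by nlinarith [hν.1])
  rw [hUps] at hle
  have hsq := pow_le_pow_left₀ (norm_nonneg _) hle 2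
  rw [mul_pow, hnorm] at hsq
  rw [mul_assoc, Kf_mul hν]
  linarith

theorem mul_sinh_self_nonneg (y : ℝ) : 0 ≤ y * Real.sinh y := by
  rcases le_total 0 y with hy | hy
  · exact mul_nonneg hy (Real.sinh_nonneg_iff.2 hy)
  · exact mul_nonneg_of_nonpos_of_nonpos hy (Real.sinh_nonpos_iff.2 hy)

theorem cosh_le_one_add_half_mul_sinh (y : ℝ) : Real.cosh y ≤ 1 + y / 2 * Real.sinh y := by
  have hcosh := (hasSum_nat_add_iff' 1).2 (Real.hasSum_cosh y)
  have hsinh := (Real.hasSum_sinh y).mul_left (y / 2)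
  have hterm (n : ℕ) : y ^ (2 * (n + 1)) / ((2 * (n + 1)).factorial : ℝ)
      ≤ y / 2 * (y ^ (2 * n + 1) / ((2 * n + 1).factorial : ℝ)) := by
    have hfact : ((2 * (n + 1)).factorial : ℝ) = (2 * n + 2) * (2 * n + 1).factorial := by
      rw [show 2 * (n + 1) = 2 * n + 1 + 1 by ring, Nat.factorial_succ]
      push_cast
      ring
    calc y ^ (2 * (n + 1)) / ((2 * (n + 1)).factorial : ℝ)
        ≤ y ^ (2 * (n + 1)) / (2 * (2 * n + 1).factorial) := by
          rw [hfact]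
          gcongr
          · exact (even_two_mul _).pow_nonneg y
          · linarith [n.cast_nonneg (α := ℝ)]
      _ = y / 2 * (y ^ (2 * n + 1) / ((2 * n + 1).factorial : ℝ)) := by
          field_simp
          ring
  simpa [add_comm] using hasSum_le hterm hcosh hsinh

theorem Kf_mul_le (ν τ : ℝ) : Kf ν τ * (1 + 4 * τ ^ 2) ≤ 4 * τ ^ 2 + (1 - 2 * w ν) ^ 2 := by
  rw [Kf, div_mul_cancel₀ _ (by positivity), Real.tanh_eq_sinh_div_cosh]
  have hsinh : 0 ≤ τ * Real.sinh (Real.pi * τ) := by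
    have h := mul_sinh_self_nonneg (Real.pi * τ)
    rwa [mul_assoc, mul_nonneg_iff_of_pos_left Real.pi_pos] at h
  have hone_le : 1 ≤ 1 / Real.cosh (Real.pi * τ)
      + 2 * τ * (Real.sinh (Real.pi * τ) / Real.cosh (Real.pi * τ)) := by
    rw [mul_div_assoc', ← add_div, one_le_div (Real.cosh_pos _)]
    have hcosh := cosh_le_one_add_half_mul_sinh (Real.pi * τ)
    have hπ := mul_le_mul_of_nonneg_right Real.pi_le_four hsinh
    linarith
  nlinarith [w_nonneg ν]

/-! ### The constant `eta` -/

theorem sqrt_nine_add_sq (ν : ℝ) : Real.sqrt (9 + 4 * ν ^ 2) ^ 2 = 9 + 4 * ν ^ 2 :=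
  Real.sq_sqrt (by positivity)

theorem sqrt_nine_add_le (ν : ℝ) : Real.sqrt (9 + 4 * ν ^ 2) ≤ 3 + 2 / 3 * ν ^ 2 :=
  Real.sqrt_le_iff.2 ⟨by positivity, by nlinarith [sq_nonneg (ν ^ 2)]⟩

theorem le_sqrt_nine_add {ν : ℝ} (hν : ν ∈ Set.Icc (0 : ℝ) 1) :
    3 + 3 / 5 * ν ^ 2 ≤ Real.sqrt (9 + 4 * ν ^ 2) := by
  have hsq : ν ^ 2 ≤ 1 := pow_le_one₀ hν.1 hν.2
  exact Real.le_sqrt_of_sq_le (by nlinarith [sq_nonneg ν])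

theorem sqrt_nine_add_add_pos {ν : ℝ} (hν : 0 ≤ ν) :
    0 < Real.sqrt (9 + 4 * ν ^ 2) + 4 * ν := by positivity

theorem eq_sqrt_three_div_two_iff {ν : ℝ} (hν : 0 ≤ ν) :
    ν = Real.sqrt 3 / 2 ↔ ν ^ 2 = 3 / 4 := by
  rw [← sq_eq_sq₀ hν (by positivity), div_pow, Real.sq_sqrt zero_le_three]
  norm_num

theorem eta_eq {ν : ℝ} (hν : ν ∈ Set.Icc (0 : ℝ) 1) :
    eta ν = 2 / (cotCoeff (1 - ν ^ 2) * (Real.sqrt (9 + 4 * ν ^ 2) + 4 * ν)) := by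
  have hc := cotCoeff_pos ν
  have hw := half_sub_w hν
  have hq := sqrt_nine_add_add_pos hν.1
  have hiff := eq_sqrt_three_div_two_iff hν.1
  rw [eta]
  split_ifs with h
  · have hsq := hiff.1 h
    have hsqrt : Real.sqrt (9 + 4 * ν ^ 2) + 4 * ν = 4 * Real.sqrt 3 := by
      rw [hsq, show (9 + 4 * (3 / 4) : ℝ) = 2 ^ 2 * 3 by norm_num,
        Real.sqrt_mul (by positivity), Real.sqrt_sq zero_le_two, h]
      ring
    rw [hsqrt, hsq, show (1 - 3 / 4 : ℝ) = 1 / 4 by norm_num, cotCoeff_quarter]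
    have hπ : Real.pi - 2 ≠ 0 := by linarith [Real.pi_gt_three]
    field_simp
    norm_num
  · have hne : 3 / 4 - ν ^ 2 ≠ 0 := fun h0 => h (hiff.2 (by linarith))
    rw [show 1 - 2 * w ν = 2 * (cotCoeff (1 - ν ^ 2) * (3 / 4 - ν ^ 2)) by linarith,
      div_eq_div_iff (by positivity) (by positivity)]
    linear_combination cotCoeff (1 - ν ^ 2) * sqrt_nine_add_sq ν

theorem eta_pos {ν : ℝ} (hν : ν ∈ Set.Icc (0 : ℝ) 1) : 0 < eta ν := by
  have hc := cotCoeff_pos ν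
  have hq := sqrt_nine_add_add_pos hν.1
  rw [eta_eq hν]
  positivity

theorem eta_mul_sq {ν : ℝ} (hν : ν ∈ Set.Icc (0 : ℝ) 1) :
    (eta ν * (1 - 2 * w ν)) ^ 2 = (Real.sqrt (9 + 4 * ν ^ 2) - 4 * ν) ^ 2 / 9 := by
  have hc := cotCoeff_pos ν
  have hq := sqrt_nine_add_add_pos hν.1
  have hmul : eta ν * (1 - 2 * w ν) = (Real.sqrt (9 + 4 * ν ^ 2) - 4 * ν) / 3 := by
    rw [eta_eq hν,
      show 1 - 2 * w ν = 2 * (cotCoeff (1 - ν ^ 2) * (3 / 4 - ν ^ 2)) by linarith [half_sub_w hν],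
      div_mul_eq_mul_div, div_eq_div_iff (by positivity) (by norm_num)]
    linear_combination (-cotCoeff (1 - ν ^ 2)) * sqrt_nine_add_sq ν
  rw [hmul]
  ring

theorem eta_sq_le {ν : ℝ} (hν : ν ∈ Set.Icc (0 : ℝ) 1) : eta ν ^ 2 ≤ 2 / (2 + 5 * ν) := by
  have hν0 := hν.1
  have hc := cotCoeff_pos ν
  have hq := le_sqrt_nine_add hν
  have hle : eta ν ≤ (3 + ν ^ 2) / (3 + 3 / 5 * ν ^ 2 + 4 * ν) := by
    calc eta ν = 2 / (cotCoeff (1 - ν ^ 2) * (Real.sqrt (9 + 4 * ν ^ 2) + 4 * ν)) := eta_eq hν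
      _ ≤ 2 / (2 / (3 + ν ^ 2) * (3 + 3 / 5 * ν ^ 2 + 4 * ν)) := by
        gcongr
        exact two_div_le_cotCoeff ν
      _ = (3 + ν ^ 2) / (3 + 3 / 5 * ν ^ 2 + 4 * ν) := by field_simp
  refine (pow_le_pow_left₀ (eta_pos hν).le hle 2).trans ?_
  rw [div_pow, div_le_div_iff₀ (by positivity) (by positivity)]
  have hdiff : 2 * (3 + 3 / 5 * ν ^ 2 + 4 * ν) ^ 2 - (3 + ν ^ 2) ^ 2 * (2 + 5 * ν)
      = ν * (3 + 27.2 * ν - 20.4 * ν ^ 2 - 1.28 * ν ^ 3 - 5 * ν ^ 4) := by ring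
  have hν2 : ν ^ 2 ≤ ν := by nlinarith [hν.2]
  have hν3 : ν ^ 3 ≤ ν := by nlinarith [hν.2]
  have hν4 : ν ^ 4 ≤ ν := by nlinarith [hν.2]
  have hfactor : 0 ≤ 3 + 27.2 * ν - 20.4 * ν ^ 2 - 1.28 * ν ^ 3 - 5 * ν ^ 4 := by linarith
  linarith [hdiff, mul_nonneg hν0 hfactor]

/-! ### The quadratic inequality for large `τ` -/

theorem cubic_le_quartic {r : ℝ} (hr : 1 ≤ r) :
    32 / 9 * (1 + 3 / 2 * r) * (2 + 5 / 4 * r) ^ 2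
      ≤ 25 / 2 * r ^ 4 - 60 * r ^ 3 + 161 * r ^ 2 := by
  obtain ⟨u, hu, rfl⟩ : ∃ u, 0 ≤ u ∧ r = 1 + u := ⟨r - 1, by linarith, by ring⟩
  nlinarith [mul_nonneg hu (sq_nonneg (u - 1)), mul_nonneg hu hu, sq_nonneg (u * (u - 3 / 4)),
    mul_nonneg hu (sq_nonneg u), mul_nonneg hu hu]

theorem five_div_le_eight_mul_sqrt_sub {ν : ℝ} (hν : ν ∈ Set.Icc (0 : ℝ) 1) :
    5 / (2 + 5 * ν) ≤ (8 * Real.sqrt (9 + 4 * ν ^ 2) - 20 * ν) / 9 := by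
  have hν0 := hν.1
  rw [div_le_div_iff₀ (by positivity) (by norm_num)]
  calc 5 * 9 ≤ (8 * (3 + 3 / 5 * ν ^ 2) - 20 * ν) * (2 + 5 * ν) := by
        nlinarith [mul_nonneg hν0 (sub_nonneg.2 hν.2), pow_nonneg hν0 3]
    _ ≤ (8 * Real.sqrt (9 + 4 * ν ^ 2) - 20 * ν) * (2 + 5 * ν) := by
        gcongr
        exact le_sqrt_nine_add hν

theorem eight_mul_sqrt_sub_sub_le {ν : ℝ} (hν : ν ∈ Set.Icc (0 : ℝ) 1) :
    (8 * Real.sqrt (9 + 4 * ν ^ 2) - 20 * ν) / 9 - 5 / (2 + 5 * ν) ≤ 2 / 3 := by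
  have hν0 := hν.1
  rw [sub_le_iff_le_add, div_add_div _ _ (by norm_num) (by positivity),
    div_le_div_iff₀ (by norm_num) (by positivity)]
  calc (8 * Real.sqrt (9 + 4 * ν ^ 2) - 20 * ν) * (3 * (2 + 5 * ν))
      ≤ (8 * (3 + 2 / 3 * ν ^ 2) - 20 * ν) * (3 * (2 + 5 * ν)) := by
        gcongr
        exact sqrt_nine_add_le ν
    _ ≤ (2 * (2 + 5 * ν) + 3 * 5) * 9 := by
        nlinarith [mul_nonneg hν0 (sub_nonneg.2 hν.2), sq_nonneg (ν - 1 / 3),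
          mul_nonneg hν0 (sq_nonneg (ν - 1 / 3))]

/-- After `X = r ^ 2` the estimate is monotone in `ν`, hence reduces to `ν = r / 4`. -/
theorem cubic_le_of_sixteen_mul_sq_le {ν X : ℝ} (hν : 0 ≤ ν) (hX : 1 ≤ X)
    (hνX : 16 * ν ^ 2 ≤ X) :
    32 / 9 * (1 + 6 * ν) * (2 + 5 * ν) ^ 2 ≤ 25 * X ^ 2 + (161 - 240 * ν - 200 * ν ^ 2) * X := by
  obtain ⟨r, hr, rfl⟩ : ∃ r, 1 ≤ r ∧ X = r ^ 2 :=
    ⟨Real.sqrt X, Real.one_le_sqrt.2 hX, (Real.sq_sqrt (by linarith)).symm⟩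
  have hνr : ν ≤ r / 4 := by nlinarith
  calc 32 / 9 * (1 + 6 * ν) * (2 + 5 * ν) ^ 2
      ≤ 32 / 9 * (1 + 6 * (r / 4)) * (2 + 5 * (r / 4)) ^ 2 := by gcongr
    _ = 32 / 9 * (1 + 3 / 2 * r) * (2 + 5 / 4 * r) ^ 2 := by ring
    _ ≤ 25 / 2 * r ^ 4 - 60 * r ^ 3 + 161 * r ^ 2 := cubic_le_quartic hr
    _ = 25 * (r ^ 2) ^ 2 + (161 - 240 * (r / 4) - 200 * (r / 4) ^ 2) * r ^ 2 := by ring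
    _ ≤ 25 * (r ^ 2) ^ 2 + (161 - 240 * ν - 200 * ν ^ 2) * r ^ 2 := by gcongr

theorem isLeGramEigenvalues_one_sub {ν x α β : ℝ} (hν : 0 ≤ ν) (hx : 0 ≤ x)
    (hα0 : 0 ≤ α) (hβ0 : 0 ≤ β) (hα : 9 * α ^ 2 + 40 * ν * α + 16 * ν ^ 2 = 64)
    (hG : 8 * (α - β) ^ 2 + 32 * ν * (α - β)
      ≤ β ^ 2 * (1 + x) ^ 2 + (9 * β ^ 2 + 2 * β * (α - β) - 16 + 8 * β * ν) * (1 + x)) :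
    IsLeGramEigenvalues ν x (1 - ν * (α + β * x) / (1 + x)) := by
  have hs : 1 - ν * (α + β * x) / (1 + x) ≤ 1 := sub_le_self _ (by positivity)
  refine ⟨(mul_le_of_le_one_right (by positivity) hs).trans
    (le_add_of_nonneg_right (by positivity)), ?_⟩
  have hvalue : (1 + x) * (9 + x) * (1 - ν * (α + β * x) / (1 + x)) ^ 2
      - 2 * ((1 + x) * (9 + x) + 4 * ν ^ 2 * (5 + x)) * (1 - ν * (α + β * x) / (1 + x))
      + ((3 - 4 * ν ^ 2 + x) ^ 2 + 4 * x)
      = ν ^ 2 * x * (β ^ 2 * (1 + x) ^ 2 + (9 * β ^ 2 + 2 * β * (α - β) - 16 + 8 * β * ν) * (1 + x)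
          - (8 * (α - β) ^ 2 + 32 * ν * (α - β))) / (1 + x) := by
    field_simp
    linear_combination (ν ^ 2 * (1 + x)) * hα
  rw [hvalue]
  have hG' := sub_nonneg.2 hG
  positivity

/-- In the notation of `isLeGramEigenvalues_one_sub`, `α` makes the value at `x = 0` equal to
`(√(9 + 4ν²) - 4ν)² / 9`, and `β` makes the limit for `x → ∞` equal to `2 / (2 + 5ν)`. -/
theorem isLeGramEigenvalues_of_sixteen_mul_sq_le {ν x t : ℝ} (hν : ν ∈ Set.Icc (0 : ℝ) 1)
    (hx : 0 ≤ x) (hνx : 16 * ν ^ 2 ≤ 1 + x)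
    (ht : t * (1 + x) ≤ (Real.sqrt (9 + 4 * ν ^ 2) - 4 * ν) ^ 2 / 9 + 2 / (2 + 5 * ν) * x) :
    IsLeGramEigenvalues ν x t := by
  have hν0 := hν.1
  have hq2 := sqrt_nine_add_sq ν
  set α := (8 * Real.sqrt (9 + 4 * ν ^ 2) - 20 * ν) / 9 with hα
  set β := 5 / (2 + 5 * ν) with hβ
  have hβ0 : 0 < β := by positivity
  have hβα : β ≤ α := five_div_le_eight_mul_sqrt_sub hν
  have hαβ : α - β ≤ 2 / 3 := eight_mul_sqrt_sub_sub_le hν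
  have hG : 8 * (α - β) ^ 2 + 32 * ν * (α - β)
      ≤ β ^ 2 * (1 + x) ^ 2 + (9 * β ^ 2 + 2 * β * (α - β) - 16 + 8 * β * ν) * (1 + x) :=
    calc 8 * (α - β) ^ 2 + 32 * ν * (α - β)
        ≤ 8 * (2 / 3) ^ 2 + 32 * ν * (2 / 3) := by gcongr
      _ = 32 / 9 * (1 + 6 * ν) * (2 + 5 * ν) ^ 2 / (2 + 5 * ν) ^ 2 := by field_simp; ring
      _ ≤ (25 * (1 + x) ^ 2 + (161 - 240 * ν - 200 * ν ^ 2) * (1 + x)) / (2 + 5 * ν) ^ 2 := by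
          gcongr
          exact cubic_le_of_sixteen_mul_sq_le hν0 (by linarith) hνx
      _ = β ^ 2 * (1 + x) ^ 2 + (9 * β ^ 2 + 0 - 16 + 8 * β * ν) * (1 + x) := by
          rw [hβ]; field_simp; ring
      _ ≤ β ^ 2 * (1 + x) ^ 2 + (9 * β ^ 2 + 2 * β * (α - β) - 16 + 8 * β * ν) * (1 + x) := by
          gcongr
          exact mul_nonneg (by positivity) (sub_nonneg.2 hβα)
  refine (isLeGramEigenvalues_one_sub hν0 hx (hβ0.le.trans hβα) hβ0.le ?_ hG).mono
    (by positivity) ?_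
  · rw [hα]
    linear_combination (64 / 9) * hq2
  · rw [one_sub_div (by positivity), le_div_iff₀ (by positivity)]
    refine ht.trans_eq ?_
    rw [hα, hβ]
    field_simp
    linear_combination (2 + 5 * ν) * hq2

/-! ### The quadratic inequality for small `τ` -/

theorem isLeGramEigenvalues_of_le_sixteen_mul_sq {ν x t : ℝ} (hν : ν ∈ Set.Icc (0 : ℝ) 1)
    (hx : 0 ≤ x) (hνx : 1 + x ≤ 16 * ν ^ 2)
    (ht : t * ((Real.sqrt (9 + 4 * ν ^ 2) + 4 * ν) ^ 2 * (1 + x))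
      ≤ (3 - 4 * ν ^ 2 + x) ^ 2 + 4 * x) :
    IsLeGramEigenvalues ν x t := by
  have hν0 := hν.1
  have hq2 := sqrt_nine_add_sq ν
  have hq0 := Real.sqrt_nonneg (9 + 4 * ν ^ 2)
  have hνq : 2 * ν ≤ Real.sqrt (9 + 4 * ν ^ 2) := Real.le_sqrt_of_sq_le (by linarith)
  set q := Real.sqrt (9 + 4 * ν ^ 2)
  replace hνq : 2 * ν ^ 2 ≤ ν * q := by nlinarith
  obtain ⟨e, he⟩ : ∃ e, e = 20 * ν ^ 2 + 8 * (ν * q) := ⟨_, rfl⟩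
  have hm : (q + 4 * ν) ^ 2 = 9 + e := by linear_combination hq2 - he
  have he2 : e ^ 2 = 40 * ν ^ 2 * e - 144 * ν ^ 4 + 576 * ν ^ 2 := by
    linear_combination (e + 20 * ν ^ 2 + 8 * (ν * q) - 40 * ν ^ 2) * he + 64 * ν ^ 2 * hq2
  rw [hm] at ht
  refine IsLeRoots.of_mul_le (by positivity) (by positivity) (by positivity) ?_ ?_ ?_ ht
  · have hdisc : ((1 + x) * (9 + x) + 4 * ν ^ 2 * (5 + x)) ^ 2
        - ((3 - 4 * ν ^ 2 + x) ^ 2 + 4 * x) * ((1 + x) * (9 + x))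
        = 16 * ν ^ 2 * ((4 + x) * ((1 + x) * (9 + x)) + 16 * ν ^ 2) := by ring
    refine sub_nonneg.1 ?_
    rw [hdisc]
    positivity
  · have hge : (1 + x) * (36 * ν ^ 2) ≤ (1 + x) * e :=
      mul_le_mul_of_nonneg_left (by linarith) (by linarith)
    have hxν : (1 + x) * x ≤ (1 + x) * (16 * ν ^ 2) :=
      mul_le_mul_of_nonneg_left (by linarith) (by linarith)
    nlinarith [mul_nonneg (sq_nonneg ν) hx]
  · obtain ⟨y, hy⟩ : ∃ y, y = 16 * ν ^ 2 - (1 + x) := ⟨_, rfl⟩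
    have hy0 : 0 ≤ y := by linarith
    have hvalue : ((9 + e) * (1 + x)) ^ 2
        - 2 * ((1 + x) * (9 + x) + 4 * ν ^ 2 * (5 + x)) * ((9 + e) * (1 + x))
        + ((3 - 4 * ν ^ 2 + x) ^ 2 + 4 * x) * ((1 + x) * (9 + x))
        = (1 + x) * x * (y ^ 2 + y * (2 * e + 1 - 24 * ν ^ 2) + 400 * ν ^ 2) := by
      rw [hy]
      linear_combination (1 + x) ^ 2 * he2
    have hcoeff : 0 ≤ 2 * e + 1 - 24 * ν ^ 2 := by linarith [sq_nonneg ν]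
    rw [hvalue]
    positivity

theorem isLeGramEigenvalues_eta {ν : ℝ} (hν : ν ∈ Set.Icc (0 : ℝ) 1) (τ : ℝ) :
    IsLeGramEigenvalues ν (4 * τ ^ 2) (eta ν ^ 2 * Kf ν τ) := by
  rcases le_total (16 * ν ^ 2) (1 + 4 * τ ^ 2) with h | h
  · refine isLeGramEigenvalues_of_sixteen_mul_sq_le hν (by positivity) h ?_
    calc eta ν ^ 2 * Kf ν τ * (1 + 4 * τ ^ 2)
        = eta ν ^ 2 * (Kf ν τ * (1 + 4 * τ ^ 2)) := by ring
      _ ≤ eta ν ^ 2 * (4 * τ ^ 2 + (1 - 2 * w ν) ^ 2) := by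
          gcongr
          exact Kf_mul_le ν τ
      _ = (eta ν * (1 - 2 * w ν)) ^ 2 + eta ν ^ 2 * (4 * τ ^ 2) := by ring
      _ ≤ (Real.sqrt (9 + 4 * ν ^ 2) - 4 * ν) ^ 2 / 9 + 2 / (2 + 5 * ν) * (4 * τ ^ 2) := by
          rw [eta_mul_sq hν]
          gcongr
          exact eta_sq_le hν
  · refine isLeGramEigenvalues_of_le_sixteen_mul_sq hν (by positivity) h ?_
    have hc := cotCoeff_pos ν
    have hq := sqrt_nine_add_add_pos hν.1
    have hK := four_mul_Kf_mul_le hν τ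
    calc eta ν ^ 2 * Kf ν τ * ((Real.sqrt (9 + 4 * ν ^ 2) + 4 * ν) ^ 2 * (1 + 4 * τ ^ 2))
        = 4 * Kf ν τ * (1 + 4 * τ ^ 2) / cotCoeff (1 - ν ^ 2) ^ 2 := by
          rw [eta_eq hν]
          generalize Real.sqrt (9 + 4 * ν ^ 2) + 4 * ν = Q at *
          field_simp
          norm_num [mul_comm]
      _ ≤ (3 - 4 * ν ^ 2 + 4 * τ ^ 2) ^ 2 + 4 * (4 * τ ^ 2) := by
          rwa [div_le_iff₀' (by positivity)]

/-! ### Maximality of `eta` -/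

theorem Kf_zero (ν : ℝ) : Kf ν 0 = (1 - 2 * w ν) ^ 2 := by
  simp only [Kf, mul_zero, Real.cosh_zero]
  ring

theorem not_isLeGramEigenvalues_zero {ν t : ℝ}
    (ht : (Real.sqrt (9 + 4 * ν ^ 2) - 4 * ν) ^ 2 / 9 < t) : ¬ IsLeGramEigenvalues ν 0 t := by
  rintro ⟨hvertex, hvalue⟩
  have hq2 := sqrt_nine_add_sq ν
  set q := Real.sqrt (9 + 4 * ν ^ 2)
  have hsum : 0 ≤ ((q - 4 * ν) ^ 2 / 9 - t) + ((q + 4 * ν) ^ 2 / 9 - t) := by linarith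
  have hprod : 0 ≤ ((q - 4 * ν) ^ 2 / 9 - t) * ((q + 4 * ν) ^ 2 / 9 - t) := by
    linear_combination hvalue / 9 + (2 / 9 * t - (q ^ 2 + 9 - 28 * ν ^ 2) / 81) * hq2
  have hpos : 0 < (q + 4 * ν) ^ 2 / 9 - t := by linarith [hsum]
  exact (mul_neg_of_neg_of_pos (sub_neg.2 ht) hpos).not_ge hprod

theorem not_isLeGramEigenvalues_zero_of_eta_lt {ν η : ℝ} (hν : ν ∈ Set.Icc (0 : ℝ) 1)
    (hne : ν ^ 2 ≠ 3 / 4) (hη : eta ν < η) : ¬ IsLeGramEigenvalues ν 0 (η ^ 2 * Kf ν 0) := by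
  refine not_isLeGramEigenvalues_zero ?_
  have hw : 1 - 2 * w ν ≠ 0 := fun h => hne <| by
    have := mul_eq_zero.1 ((half_sub_w hν).symm.trans (by linarith))
    linarith [this.resolve_left (cotCoeff_pos ν).ne']
  rw [← eta_mul_sq hν, Kf_zero, mul_pow]
  exact mul_lt_mul_of_pos_right (pow_lt_pow_left₀ hη (eta_pos hν).le two_ne_zero) (by positivity)

open Filter Topology in
theorem tendsto_Kf_div_sq {ν : ℝ} (hν : ν ∈ Set.Icc (0 : ℝ) 1) (hsq : ν ^ 2 = 3 / 4) :
    Tendsto (fun τ => Kf ν τ / τ ^ 2) (𝓝[≠] 0) (𝓝 ((Real.pi - 2) ^ 2)) := by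
  have hUps : (Ups ν : ℂ) = 1 / 2 := by
    rw [Ups, hsq, show (1 - 3 / 4 : ℝ) = (1 / 2) ^ 2 by norm_num, Real.sqrt_sq (by norm_num)]
    norm_num
  have hline : HasDerivAt (fun τ : ℝ => 1 / 2 - Complex.I * τ) (-Complex.I) 0 := by
    refine ((Complex.ofRealCLM.hasDerivAt.const_mul Complex.I).const_sub (1 / 2)).congr_deriv ?_
    simp
  have hcurve : HasDerivAt (fun τ : ℝ => mulCot (1 / 2 - Complex.I * τ))
      ((1 - Real.pi / 2 : ℝ) * -Complex.I) 0 :=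
    HasDerivAt.comp (0 : ℝ) (h₂ := mulCot) (by simpa using hasDerivAt_mulCot_half) hline
  have hslope := (hcurve.tendsto_slope_zero.norm.pow 2).const_mul 4
  have hden : Tendsto (fun τ : ℝ => 1 + 4 * τ ^ 2) (𝓝[≠] 0) (𝓝 1) :=
    tendsto_nhdsWithin_of_tendsto_nhds (by
      simpa using (show Continuous fun τ : ℝ => 1 + 4 * τ ^ 2 by fun_prop).tendsto 0)
  refine ((hslope.div hden one_ne_zero).congr fun τ => ?_).trans_eq ?_
  · have hK := Kf_mul hν τ
    rw [hUps] at hK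
    rw [Pi.div_apply, norm_smul, norm_inv, mul_pow, inv_pow, Real.norm_eq_abs, sq_abs,
      mul_left_comm, zero_add, Complex.ofReal_zero, mul_zero, sub_zero, ← hK]
    field_simp
  · rw [norm_mul, norm_neg, Complex.norm_I, Complex.norm_real, mul_one, Real.norm_eq_abs, sq_abs,
      div_one]
    ring_nf

open Filter Topology in
/-- At `ν ^ 2 = 3 / 4` the smaller eigenvalue vanishes at `τ = 0`, where it is asymptotic to
`τ ^ 2 / 3`. -/
theorem exists_not_isLeGramEigenvalues_of_tendsto {ν L : ℝ} {f : ℝ → ℝ} (hsq : ν ^ 2 = 3 / 4)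
    (hf : Tendsto (fun τ => f τ / τ ^ 2) (𝓝[≠] 0) (𝓝 L)) (hL : 1 < 3 * L) :
    ∃ τ : ℝ, ¬ IsLeGramEigenvalues ν (4 * τ ^ 2) (f τ) := by
  have hcont : Continuous fun p : ℝ × ℝ =>
      (1 + 4 * p.1 ^ 2) * (9 + 4 * p.1 ^ 2) * (p.1 ^ 2 * p.2 ^ 2)
        - 2 * ((1 + 4 * p.1 ^ 2) * (9 + 4 * p.1 ^ 2) + 3 * (5 + 4 * p.1 ^ 2)) * p.2
        + (16 * p.1 ^ 2 + 16) := by fun_prop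
  have hlim := (hcont.tendsto (0, L)).comp
    ((tendsto_nhdsWithin_of_tendsto_nhds tendsto_id).prodMk_nhds hf)
  obtain ⟨τ, hneg, hτ⟩ :=
    ((hlim.eventually_lt_const (u := 0) (by norm_num; linarith)).and self_mem_nhdsWithin).exists
  replace hτ : τ ≠ 0 := hτ
  refine ⟨τ, fun ⟨_, hvalue⟩ => (mul_neg_of_pos_of_neg (by positivity : 0 < τ ^ 2) hneg).not_ge ?_⟩
  refine hvalue.trans_eq ?_
  simp only [Function.comp_apply, id]
  rw [hsq]
  field_simp
  ring

theorem exists_not_isLeGramEigenvalues_of_eta_lt {ν η : ℝ} (hν : ν ∈ Set.Icc (0 : ℝ) 1)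
    (hsq : ν ^ 2 = 3 / 4) (hη : eta ν < η) :
    ∃ τ : ℝ, ¬ IsLeGramEigenvalues ν (4 * τ ^ 2) (η ^ 2 * Kf ν τ) := by
  have hπ : 0 < Real.pi - 2 := by linarith [Real.pi_gt_three]
  have heta : eta ν ^ 2 * (3 * (Real.pi - 2) ^ 2) = 1 := by
    rw [eta, if_pos ((eq_sqrt_three_div_two_iff hν.1).2 hsq), div_pow, mul_pow,
      Real.sq_sqrt zero_le_three]
    field_simp
  have hηπ : eta ν ^ 2 * (3 * (Real.pi - 2) ^ 2) < η ^ 2 * (3 * (Real.pi - 2) ^ 2) :=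
    mul_lt_mul_of_pos_right (pow_lt_pow_left₀ hη (eta_pos hν).le two_ne_zero) (by positivity)
  refine exists_not_isLeGramEigenvalues_of_tendsto hsq
    (((tendsto_Kf_div_sq hν hsq).const_mul (η ^ 2)).congr fun τ => mul_div_assoc' _ _ _) ?_
  linarith

/-- For ν ∈ [0,1], s = ±1/2 and every τ ∈ ℝ the matrix
M_s^ν(τ)* M_s^ν(τ) − η_ν² K^ν(τ) 𝟙 is positive semidefinite, and η_ν is the maximal
constant with this property. -/
theorem Mmat_posSemidef_max (ν : ℝ) (hν : ν ∈ Set.Icc (0 : ℝ) 1) (s : ℝ)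
    (hs : s = -(1/2) ∨ s = 1/2) :
    (∀ τ : ℝ, ((Mmat ν s τ)ᴴ * Mmat ν s τ
        - ((eta ν ^ 2 * Kf ν τ : ℝ) : ℂ) • (1 : Matrix (Fin 2) (Fin 2) ℂ)).PosSemidef) ∧
    (∀ η : ℝ, eta ν < η → ∃ τ : ℝ, ¬ ((Mmat ν s τ)ᴴ * Mmat ν s τ
        - ((η ^ 2 * Kf ν τ : ℝ) : ℂ) • (1 : Matrix (Fin 2) (Fin 2) ℂ)).PosSemidef) := by
  simp only [posSemidef_Mmat_gram_sub_iff]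
  refine ⟨isLeGramEigenvalues_eta hν, fun η hη => ?_⟩
  by_cases hsq : ν ^ 2 = 3 / 4
  · exact exists_not_isLeGramEigenvalues_of_eta_lt hν hsq hη
  · refine ⟨0, ?_⟩
    simpa using not_isLeGramEigenvalues_zero_of_eta_lt hν hsq hη
end
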